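/- Fix an integer a ≥ 1 and f ∈ Ḣ^{a−1}_⋄. Then for every θ ∈ Ḣ^a_⋄, the solution of the periodic 2D Navier–Stokes equations satisfies u_θ ∈ C([0,T], Ḣ^a_⋄) ∩ L²([0,T], Ḣ^{a+1}_⋄). Moreover, there exists C = C(T, ν, a, ‖f‖_{Ḣ^{a−1}}) > 0 such that for all θ ∈ Ḣ^a_⋄: sup_{0≤t≤T} ‖u_θ(t)‖²_{Ḣ^a} + ∫₀ᵀ ‖u_θ(t)‖²_{Ḣ^{a+1}} dt ≤ C (1 + ‖θ‖^{2a}_{Ḣ^a}). -/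

import Mathlib

open MeasureTheory Set
open scoped BigOperators

noncomputable section

namespace NS2D

/-- Nonzero Fourier frequencies of the 2D torus `Ω = 𝕋²`. -/
def Freq : Type := {k : ℤ × ℤ // k ≠ 0}

/-- Squared Euclidean modulus `|k|²` of a frequency. -/
def knormSq (k : Freq) : ℝ := (k.1.1 : ℝ) ^ 2 + (k.1.2 : ℝ) ^ 2

/-- Eigenvalue `λ_k = 4π²|k|²` of the periodic Laplacian `−Δ`. -/
def lam (k : Freq) : ℝ := 4 * Real.pi ^ 2 * knormSq k

/-- A divergence-free mean-zero vector field `u ∈ Ḣ_⋄` (or, more generally, an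
element of the scale `Ḣ^α_⋄`) on the torus is represented by its Fourier
coefficients `c k` along the orthonormal basis
`e_k(x) = |k|⁻¹ (k₂, −k₁) exp(2πi k·x)` of divergence-free fields. -/
abbrev Coef : Type := Freq → ℂ

/-- Negation of a frequency. -/
def fneg (k : Freq) : Freq := ⟨-k.1, neg_ne_zero.mpr k.2⟩

/-- The conjugacy condition expressing that the coefficients `c` represent a
real-valued vector field (note `e_{−k} = − conj e_k`). -/
def IsReal (c : Coef) : Prop := ∀ k, c (fneg k) = - (starRingEnd ℂ) (c k)

/-- Squared homogeneous Sobolev norm `‖·‖²_{Ḣ^α} = Σ_k λ_k^α |c k|²`. -/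
def hSq (α : ℝ) (c : Coef) : ℝ := ∑' k, lam k ^ α * ‖c k‖ ^ 2

/-- Homogeneous Sobolev norm `‖·‖_{Ḣ^α}`. -/
def hN (α : ℝ) (c : Coef) : ℝ := Real.sqrt (hSq α c)

/-- Finiteness of the `Ḣ^α`-norm. -/
def FinH (α : ℝ) (c : Coef) : Prop := Summable fun k => lam k ^ α * ‖c k‖ ^ 2

/-- Membership in `Ḣ^α_⋄` (real-valued field with finite `Ḣ^α`-norm). -/
def MemH (α : ℝ) (c : Coef) : Prop := IsReal c ∧ FinH α c

/-- Membership in `Ḣ^∞_⋄ = C^∞(Ω)² ∩ Ḣ_⋄`: all Sobolev norms are finite. -/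
def MemHinf (c : Coef) : Prop := ∀ α : ℝ, MemH α c

/-- Real `Ḣ^α` inner product `⟨·,·⟩_{Ḣ^α}` (for real-valued fields). -/
def hInner (α : ℝ) (c d : Coef) : ℝ := ∑' k, lam k ^ α * (c k * (starRingEnd ℂ) (d k)).re

/-- The `L²` inner product. -/
def innerC (c d : Coef) : ℂ := ∑' k, c k * (starRingEnd ℂ) (d k)

/-- The unit vector `(k₂, −k₁)/|k|` spanning the divergence-free direction at
frequency `k`. -/
def evec (k : Freq) : ℝ × ℝ :=
  ((k.1.2 : ℝ) / Real.sqrt (knormSq k), -((k.1.1 : ℝ)) / Real.sqrt (knormSq k))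

/-- Euclidean dot product on `ℝ²`. -/
def dotR (a b : ℝ × ℝ) : ℝ := a.1 * b.1 + a.2 * b.2

/-- A frequency as a real vector. -/
def fvec (k : Freq) : ℝ × ℝ := ((k.1.1 : ℝ), (k.1.2 : ℝ))

/-- Fourier coefficients (along the basis `e_k`) of the Leray-projected
transport nonlinearity `B[u,v] = P[(u·∇)v]`:
`(B[u,v])^(k) · ē_k = 2πi Σ_{m+n=k, n≠0} c_m d_n (e_m·n)(e_n·e_k)`. -/
def Bc (c d : Coef) : Coef := fun k =>
  (((2 * Real.pi : ℝ) : ℂ) * Complex.I) *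
    ∑' m : Freq,
      if h : k.1 - m.1 ≠ 0 then
        c m * d ⟨k.1 - m.1, h⟩ *
          (((dotR (evec m) (fvec ⟨k.1 - m.1, h⟩) *
            dotR (evec ⟨k.1 - m.1, h⟩) (evec k) : ℝ)) : ℂ)
      else 0

/-- The Laplacian `Δ` acting on the scale: `(Δu)^(k) = −λ_k û(k)`. -/
def lapC (c : Coef) : Coef := fun k => -((lam k : ℝ) : ℂ) * c k

/-- Continuity of a trajectory `t ↦ u(t)`, `t ∈ [0,T]`, for the `Ḣ^α`-norm:
`u ∈ C([0,T], Ḣ^α_⋄)`. -/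
def ContH (α : ℝ) (T : ℝ) (u : ℝ → Coef) : Prop :=
  ∀ t ∈ Icc (0:ℝ) T, ∀ ε > 0, ∃ δ > 0, ∀ s ∈ Icc (0:ℝ) T,
    |s - t| < δ → hN α (u s - u t) < ε

/-- Membership `u ∈ L²([0,T], Ḣ^α_⋄)`. -/
def MemL2H (α : ℝ) (T : ℝ) (u : ℝ → Coef) : Prop :=
  (∀ t ∈ Ioc (0:ℝ) T, MemH α (u t)) ∧
    IntegrableOn (fun t => hSq α (u t)) (Ioc 0 T)

/-- `u` is a strong solution on `[0,T]` of the (Leray-projected) periodic 2D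
Navier–Stokes equations `du/dt + νAu + B[u,u] = f`, `u(0) = θ`, posed in `Ḣ_⋄`:
the Fourier coefficients satisfy the corresponding system of ODEs on `(0,T]`,
the trajectory is continuous into `Ḣ¹_⋄` (in particular at `t = 0`), and lies
in `L²([0,T], Ḣ²_⋄)`. -/
structure IsNSSol (ν : ℝ) (f : Coef) (T : ℝ) (θ : Coef) (u : ℝ → Coef) : Prop where
  init : u 0 = θ
  real : ∀ t ∈ Icc (0:ℝ) T, IsReal (u t)
  deriv : ∀ (k : Freq), ∀ t ∈ Ioc (0:ℝ) T,
    HasDerivAt (fun s => u s k)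
      (f k - ((ν * lam k : ℝ) : ℂ) * u t k - Bc (u t) (u t) k) t
  contH1 : ContH 1 T u
  memL2H2 : MemL2H 2 T u

/-- `U` solves the linear parabolic equation
`dU/dt − νΔU + B[u₀, U] + B[U, u₁] = g`, `U(0) = ξ`, on `[0,T]`. -/
structure IsLinPSol (ν : ℝ) (u₀ u₁ : ℝ → Coef) (g : ℝ → Coef) (T : ℝ) (ξ : Coef)
    (U : ℝ → Coef) : Prop where
  init : U 0 = ξ
  real : ∀ t ∈ Icc (0:ℝ) T, IsReal (U t)
  deriv : ∀ (k : Freq), ∀ t ∈ Ioc (0:ℝ) T,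
    HasDerivAt (fun s => U s k)
      (g t k - ((ν * lam k : ℝ) : ℂ) * U t k - Bc (u₀ t) (U t) k - Bc (U t) (u₁ t) k) t

/-- `U = 𝕀_θ[ξ]` solves the linearisation of Navier–Stokes along the
trajectory `u₀`: `dU/dt − νΔU + B[u₀,U] + B[U,u₀] = 0`, `U(0) = ξ`. -/
def IsLinSol (ν : ℝ) (u₀ : ℝ → Coef) (T : ℝ) (ξ : Coef) (U : ℝ → Coef) : Prop :=
  IsLinPSol ν u₀ u₀ (fun _ => 0) T ξ U

/-- The heat semigroup `S_t = e^{νtΔ}` on the scale `Ḣ^α_⋄`. -/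
def heatS (ν t : ℝ) (c : Coef) : Coef := fun k =>
  ((Real.exp (-(ν * lam k * t)) : ℝ) : ℂ) * c k

/-- Duhamel representation of the solution of the periodic heat equation
`du/dt − νΔu = g`, `u(0) = h`. -/
def heatSol (ν : ℝ) (g : ℝ → Coef) (h : Coef) : ℝ → Coef := fun t k =>
  ((Real.exp (-(ν * lam k * t)) : ℝ) : ℂ) *
    (h k + ∫ s in (0:ℝ)..t, ((Real.exp (ν * lam k * s) : ℝ) : ℂ) * g s k)

/-- Real-linearity of a map on the coefficient space. -/
def IsLinMap (Λ : Coef → Coef) : Prop :=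
  (∀ c d, Λ (c + d) = Λ c + Λ d) ∧ ∀ (r : ℝ) (c : Coef), Λ (r • c) = r • Λ c

/-- `Λ` defines a compact (linear) operator `Ḣ^α_⋄ → Ḣ^β_⋄`: it is linear,
maps `Ḣ^α_⋄` into `Ḣ^β_⋄`, and the image of the `Ḣ^α`-unit ball is totally
bounded for the `Ḣ^β`-norm. -/
def IsCompactOp (α β : ℝ) (Λ : Coef → Coef) : Prop :=
  IsLinMap Λ ∧ (∀ c, MemH α c → MemH β (Λ c)) ∧
    ∀ ε > 0, ∃ S : Finset Coef, ∀ c, MemH α c → hN α c ≤ 1 →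
      ∃ s ∈ S, hN β (Λ c - s) < ε

/-- The index `a* = |a|+1` if `|a| ≤ 1`, `a* = |a|` if `|a| ≥ 2`. -/
def astar (a : ℤ) : ℤ := if |a| ≤ 1 then |a| + 1 else |a|

/-- `i`-th component of the unit vector `evec k`. -/
def evecC (i : Fin 2) (k : Freq) : ℝ := if i = 0 then (evec k).1 else (evec k).2

/-- Fourier coefficients (over all of `ℤ²`) of the scalar component `u_i` of a
divergence-free field with coefficients `c`. -/
def compCoef (i : Fin 2) (c : Coef) : ℤ × ℤ → ℂ := fun n =>
  if h : n ≠ 0 then c ⟨n, h⟩ * ((evecC i ⟨n, h⟩ : ℝ) : ℂ) else 0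

/-- Convolution: Fourier coefficients of a pointwise product of two scalar
functions. -/
def convC (F G : ℤ × ℤ → ℂ) : ℤ × ℤ → ℂ := fun n => ∑' m : ℤ × ℤ, F m * G (n - m)

/-- Squared homogeneous Sobolev norm of a scalar function given by its Fourier
coefficients over `ℤ²`. -/
def hSqScalar (α : ℝ) (F : ℤ × ℤ → ℂ) : ℝ := ∑' k : Freq, lam k ^ α * ‖F k.1‖ ^ 2

/-- `‖u vᵀ‖²_{Ḣ^α} = Σ_{i,j=1}^2 ‖u_i v_j‖²_{Ḣ^α}`. -/
def hSqMat (α : ℝ) (c d : Coef) : ℝ :=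
  ∑ i : Fin 2, ∑ j : Fin 2, hSqScalar α (convC (compCoef i c) (compCoef j d))

/-- The character `exp(2πi k·x)`. -/
def efun (k : Freq) (x : ℝ × ℝ) : ℂ :=
  Complex.exp ((((2 * Real.pi : ℝ)) : ℂ) * Complex.I *
    ((k.1.1 : ℂ) * (x.1 : ℂ) + (k.1.2 : ℂ) * (x.2 : ℂ)))

/-- Pointwise evaluation of the `i`-th component of the field. -/
def evalComp (i : Fin 2) (c : Coef) (x : ℝ × ℝ) : ℂ :=
  ∑' k, c k * ((evecC i k : ℝ) : ℂ) * efun k x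

/-- Supremum norm (`C⁰`-norm) of the field. -/
def c0N (c : Coef) : ℝ := ⨆ x : ℝ × ℝ, max ‖evalComp 0 c x‖ ‖evalComp 1 c x‖

/-- The partial derivative `∂_j` acting on divergence-free fields. -/
def pderiv (j : Fin 2) (c : Coef) : Coef := fun k =>
  (((2 * Real.pi : ℝ) : ℂ) * Complex.I) *
    (if j = 0 then ((k.1.1 : ℤ) : ℂ) else ((k.1.2 : ℤ) : ℂ)) * c k

/-- `C¹`-norm of the field. -/
def c1N (c : Coef) : ℝ := c0N c + c0N (pderiv 0 c) + c0N (pderiv 1 c)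

/-- Norm of the multiplier space `B^ℓ`: `C^ℓ(Ω)²` for `ℓ ≤ 1` and `Ḣ^ℓ` for
`ℓ ≥ 2`. -/
def bN (ℓ : ℕ) (c : Coef) : ℝ :=
  if ℓ = 0 then c0N c else if ℓ = 1 then c1N c else hN (ℓ : ℝ) c

end NS2D

namespace NS2D

/-- The wave vector `2π k` as a complex number. -/
def vc (k : ℤ × ℤ) : ℂ := ((2 * Real.pi : ℝ) : ℂ) * ((k.1 : ℂ) + (k.2 : ℂ) * Complex.I)

/-- The modulus of the wave vector. -/
def rho (k : ℤ × ℤ) : ℝ := ‖vc k‖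

/-- Cross product of wave vectors. -/
def crs (m n : ℤ × ℤ) : ℝ := -((starRingEnd ℂ) (vc m) * vc n).im

/-- Dot product of wave vectors. -/
def dts (m n : ℤ × ℤ) : ℝ := ((starRingEnd ℂ) (vc m) * vc n).re

lemma vc_add (m n : ℤ × ℤ) : vc (m + n) = vc m + vc n := by
  simp only [vc, Prod.fst_add, Prod.snd_add]; push_cast; ring

lemma vc_neg (m : ℤ × ℤ) : vc (-m) = - vc m := by
  simp only [vc, Prod.fst_neg, Prod.snd_neg]; push_cast; ring

lemma rho_nonneg (k : ℤ × ℤ) : 0 ≤ rho k := norm_nonneg _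

lemma rho_zero : rho 0 = 0 := by simp [rho, vc]

lemma rho_neg (k : ℤ × ℤ) : rho (-k) = rho k := by simp [rho, vc_neg]

lemma rho_add_le (m n : ℤ × ℤ) : rho (m + n) ≤ rho m + rho n := by
  simp only [rho, vc_add]; exact norm_add_le _ _

lemma rho_le_add1 (m n : ℤ × ℤ) : rho n ≤ rho m + rho (m + n) := by
  have := rho_add_le (-m) (m + n)
  rwa [neg_add_cancel_left, rho_neg] at this

lemma rho_le_add2 (m n : ℤ × ℤ) : rho m ≤ rho n + rho (m + n) := by
  have := rho_le_add1 n m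
  rwa [add_comm n m] at this

lemma rho_sq (k : ℤ × ℤ) : rho k ^ 2 = 4 * Real.pi ^ 2 * ((k.1 : ℝ) ^ 2 + (k.2 : ℝ) ^ 2) := by
  rw [rho, ← Complex.normSq_eq_norm_sq, Complex.normSq_apply]
  simp [vc]; ring

lemma one_le_isum {k : ℤ × ℤ} (hk : k ≠ 0) : (1 : ℝ) ≤ (k.1 : ℝ) ^ 2 + (k.2 : ℝ) ^ 2 := by
  have : (1 : ℤ) ≤ k.1 ^ 2 + k.2 ^ 2 := by
    by_contra h
    have h1 : k.1 = 0 := by nlinarith [sq_nonneg k.1, sq_nonneg k.2]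
    have h2 : k.2 = 0 := by nlinarith [sq_nonneg k.1, sq_nonneg k.2]
    exact hk (Prod.ext h1 h2)
  exact_mod_cast this

lemma isum_le (k : ℤ × ℤ) : (k.1 : ℝ) ^ 2 + (k.2 : ℝ) ^ 2 ≤ rho k ^ 2 := by
  rw [rho_sq]
  have h : (1 : ℝ) ≤ 4 * Real.pi ^ 2 := by nlinarith [Real.pi_gt_three]
  nlinarith [sq_nonneg (k.1 : ℝ), sq_nonneg (k.2 : ℝ)]

lemma one_le_rho {k : ℤ × ℤ} (hk : k ≠ 0) : 1 ≤ rho k := by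
  have h1 := one_le_isum hk
  have h2 := isum_le k
  have h3 := rho_nonneg k
  nlinarith

lemma crs_swap (m n : ℤ × ℤ) : crs n m = - crs m n := by
  simp [crs]; ring

lemma crs_inv (m n : ℤ × ℤ) : crs (-m) (m + n) = - crs m n := by
  simp [crs, vc_add, vc_neg]; ring

lemma abs_crs_le (m n : ℤ × ℤ) : |crs m n| ≤ rho m * rho n := by
  rw [crs, abs_neg]
  refine (Complex.abs_im_le_norm _).trans ?_
  simp [rho]

lemma abs_crs_le' (m n : ℤ × ℤ) : |crs m n| ≤ rho m * rho (m + n) := by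
  have := abs_crs_le (-m) (m + n)
  rwa [crs_inv, abs_neg, rho_neg] at this

lemma abs_dts_le (m n : ℤ × ℤ) : |dts m n| ≤ rho m * rho n := by
  rw [dts]
  refine (Complex.abs_re_le_norm _).trans ?_
  simp [rho]

lemma dts_add (m n : ℤ × ℤ) : dts n (m + n) = rho n ^ 2 + dts n m := by
  rw [rho, ← Complex.normSq_eq_norm_sq, Complex.normSq_apply]
  simp [dts, vc_add]; ring

lemma dts_swap (m n : ℤ × ℤ) : dts n m = dts m n := by
  simp [dts]; ring

/-- summing the indicator `ρ m ≤ 2 ρ k` over `m`. -/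
lemma count_sum {k : ℤ × ℤ} (hk : k ≠ 0) :
    Summable (fun m : ℤ × ℤ => if rho m ≤ 2 * rho k then (1 : ℝ) else 0) ∧
    ∑' m : ℤ × ℤ, (if rho m ≤ 2 * rho k then (1 : ℝ) else 0) ≤ 25 * rho k ^ 2 := by
  classical
  set s : ℝ := (k.1 : ℝ) ^ 2 + (k.2 : ℝ) ^ 2 with hs
  have hs1 : 1 ≤ s := one_le_isum hk
  have hsr : s ≤ rho k ^ 2 := isum_le k
  set R : ℝ := Real.sqrt s with hR
  have hRs : R ^ 2 = s := Real.sq_sqrt (by linarith)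
  have hR0 : 0 ≤ R := Real.sqrt_nonneg _
  have hR1 : 1 ≤ R := by nlinarith
  set K : ℕ := ⌊2 * R⌋₊ with hK
  have hKle : (K : ℝ) ≤ 2 * R := Nat.floor_le (by linarith)
  set F : Finset (ℤ × ℤ) := (Finset.Icc (-(K : ℤ)) K) ×ˢ (Finset.Icc (-(K : ℤ)) K) with hF
  have hmem : ∀ m : ℤ × ℤ, rho m ≤ 2 * rho k → m ∈ F := by
    intro m hm
    have h1 : rho m ^ 2 ≤ 4 * rho k ^ 2 := by nlinarith [rho_nonneg m, rho_nonneg k]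
    rw [rho_sq, rho_sq] at h1
    have hpi : 0 < 4 * Real.pi ^ 2 := by positivity
    have h2 : (m.1 : ℝ) ^ 2 + (m.2 : ℝ) ^ 2 ≤ (2 * R) ^ 2 := by
      rw [mul_pow, hRs]
      nlinarith
    have key : ∀ x : ℤ, (x : ℝ) ^ 2 ≤ (2 * R) ^ 2 → x ∈ Finset.Icc (-(K : ℤ)) K := by
      intro x hx
      have hx' : |(x : ℝ)| ≤ 2 * R := by
        exact abs_le_of_sq_le_sq hx (by linarith)
      have : x.natAbs ≤ K := by
        apply Nat.le_floor
        rw [Nat.cast_natAbs]; push_cast; exact hx'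
      rw [Finset.mem_Icc]; omega
    rw [hF, Finset.mem_product]
    exact ⟨key _ (by nlinarith [sq_nonneg (m.2 : ℝ)]), key _ (by nlinarith [sq_nonneg (m.1 : ℝ)])⟩
  have hz : ∀ m ∉ F, (if rho m ≤ 2 * rho k then (1 : ℝ) else 0) = 0 := by
    intro m hm
    rw [if_neg]; intro h; exact hm (hmem m h)
  refine ⟨summable_of_ne_finset_zero (s := F) hz, ?_⟩
  rw [tsum_eq_sum (s := F) hz]
  calc ∑ m ∈ F, (if rho m ≤ 2 * rho k then (1 : ℝ) else 0) ≤ ∑ m ∈ F, (1 : ℝ) := by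
        apply Finset.sum_le_sum; intro m _; split_ifs <;> norm_num
    _ = (2 * K + 1) ^ 2 := by
        rw [hF]
        simp only [Finset.sum_const, Finset.card_product, Int.card_Icc, nsmul_eq_mul, mul_one]
        have : ((K : ℤ) + 1 - -(K : ℤ)).toNat = 2 * K + 1 := by omega
        rw [this]; push_cast; ring
    _ ≤ (5 * R) ^ 2 := by
        apply pow_le_pow_left₀ (by positivity); linarith
    _ ≤ 25 * rho k ^ 2 := by nlinarith

lemma ind_sum {r : ℤ × ℤ → ℝ} (hr0 : r 0 = 0) (hr1 : Summable fun k => rho k ^ 2 * r k ^ 2) :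
    Summable (fun x : (ℤ × ℤ) × (ℤ × ℤ) =>
      r x.1 ^ 2 * (if rho x.2 ≤ 2 * rho x.1 then (1 : ℝ) else 0)) ∧
    ∑' x : (ℤ × ℤ) × (ℤ × ℤ),
      r x.1 ^ 2 * (if rho x.2 ≤ 2 * rho x.1 then (1 : ℝ) else 0)
      ≤ 25 * ∑' k, rho k ^ 2 * r k ^ 2 := by
  have hs : ∀ k, Summable (fun m : ℤ × ℤ =>
      r k ^ 2 * (if rho m ≤ 2 * rho k then (1 : ℝ) else 0)) := by
    intro k
    by_cases hk : k = 0
    · subst hk; simp [hr0, summable_zero]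
    · exact (count_sum hk).1.mul_left _
  have hle : ∀ k, ∑' m : ℤ × ℤ, r k ^ 2 * (if rho m ≤ 2 * rho k then (1 : ℝ) else 0)
      ≤ 25 * (rho k ^ 2 * r k ^ 2) := by
    intro k
    by_cases hk : k = 0
    · subst hk; simp [hr0]
    · rw [tsum_mul_left]
      have := (count_sum hk).2
      nlinarith [sq_nonneg (r k)]
  have hn : ∀ k (m : ℤ × ℤ), 0 ≤ r k ^ 2 * (if rho m ≤ 2 * rho k then (1 : ℝ) else 0) := by
    intro k m; split_ifs <;> positivity
  have hsum2 : Summable fun k => ∑' m : ℤ × ℤ,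
      r k ^ 2 * (if rho m ≤ 2 * rho k then (1 : ℝ) else 0) :=
    Summable.of_nonneg_of_le (fun k => tsum_nonneg (hn k)) hle (hr1.mul_left 25)
  have hS : Summable (fun x : (ℤ × ℤ) × (ℤ × ℤ) =>
      r x.1 ^ 2 * (if rho x.2 ≤ 2 * rho x.1 then (1 : ℝ) else 0)) := by
    rw [summable_prod_of_nonneg (fun x => hn x.1 x.2)]
    exact ⟨hs, hsum2⟩
  refine ⟨hS, ?_⟩
  rw [hS.tsum_prod' hs, ← tsum_mul_left]
  exact hsum2.tsum_le_tsum hle (hr1.mul_left 25)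

lemma tri_pt {ε α β γ : ℝ} (hε : 0 < ε) (h : α ≤ β + γ) (p q r : ℝ) :
    p * q * r ≤ ε⁻¹ * (p ^ 2 * q ^ 2 + p ^ 2 * r ^ 2) +
      ε * (q ^ 2 * (if α ≤ 2 * β then (1 : ℝ) else 0) +
        r ^ 2 * (if α ≤ 2 * γ then (1 : ℝ) else 0)) := by
  have ag : ∀ a b : ℝ, a * b ≤ ε⁻¹ * a ^ 2 + ε * b ^ 2 := by
    intro a b
    have h1 : ε⁻¹ * a ^ 2 + ε * b ^ 2 - a * b
      = ε⁻¹ * ((a - ε * b / 2) ^ 2 + 3 / 4 * (ε * b) ^ 2) := by field_simp; ring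
    have h2 : 0 ≤ ε⁻¹ * ((a - ε * b / 2) ^ 2 + 3 / 4 * (ε * b) ^ 2) := by positivity
    linarith
  have n1 : 0 ≤ ε⁻¹ * (p ^ 2 * q ^ 2) := by positivity
  have n2 : 0 ≤ ε⁻¹ * (p ^ 2 * r ^ 2) := by positivity
  have n3 : 0 ≤ ε * (q ^ 2 * (if α ≤ 2 * β then (1 : ℝ) else 0)) := by
    split_ifs <;> positivity
  have n4 : 0 ≤ ε * (r ^ 2 * (if α ≤ 2 * γ then (1 : ℝ) else 0)) := by
    split_ifs <;> positivity
  rw [mul_add, mul_add]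
  by_cases hc : α ≤ 2 * γ
  · have := ag (p * q) r
    rw [mul_pow] at this
    rw [if_pos hc] at n4 ⊢
    linarith
  · have hc' : α ≤ 2 * β := by push Not at hc; linarith
    have := ag (p * r) q
    rw [mul_pow] at this
    rw [if_pos hc'] at n3 ⊢
    linarith

/-- The basic trilinear estimate. -/
lemma tri {A B C : (ℤ × ℤ) × (ℤ × ℤ) → ℤ × ℤ}
    (eAB eAC : (ℤ × ℤ) × (ℤ × ℤ) ≃ (ℤ × ℤ) × (ℤ × ℤ))
    (hAB : ∀ x, eAB x = (A x, B x)) (hAC : ∀ x, eAC x = (A x, C x))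
    (hABC : ∀ x, rho (A x) ≤ rho (B x) + rho (C x))
    {p q r : ℤ × ℤ → ℝ} (hp : ∀ k, 0 ≤ p k) (hq : ∀ k, 0 ≤ q k) (hr : ∀ k, 0 ≤ r k)
    (hq0 : q 0 = 0) (hr0 : r 0 = 0)
    (hpS : Summable fun k => p k ^ 2) (hqS : Summable fun k => q k ^ 2)
    (hrS : Summable fun k => r k ^ 2)
    (hq1 : Summable fun k => rho k ^ 2 * q k ^ 2) (hr1 : Summable fun k => rho k ^ 2 * r k ^ 2) :
    Summable (fun x => p (A x) * q (B x) * r (C x)) ∧ ∀ ε > 0,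
    ∑' x, p (A x) * q (B x) * r (C x) ≤
      ε⁻¹ * (∑' k, p k ^ 2) * (∑' k, q k ^ 2 + ∑' k, r k ^ 2) +
      25 * ε * (∑' k, rho k ^ 2 * q k ^ 2 + ∑' k, rho k ^ 2 * r k ^ 2) := by
  set f1 : (ℤ × ℤ) × (ℤ × ℤ) → ℝ := fun x => p (A x) ^ 2 * q (B x) ^ 2 with hf1
  set f2 : (ℤ × ℤ) × (ℤ × ℤ) → ℝ := fun x => p (A x) ^ 2 * r (C x) ^ 2 with hf2
  set g1 : (ℤ × ℤ) × (ℤ × ℤ) → ℝ :=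
    fun x => q (B x) ^ 2 * (if rho (A x) ≤ 2 * rho (B x) then (1 : ℝ) else 0) with hg1
  set g2 : (ℤ × ℤ) × (ℤ × ℤ) → ℝ :=
    fun x => r (C x) ^ 2 * (if rho (A x) ≤ 2 * rho (C x) then (1 : ℝ) else 0) with hg2
  have pq : Summable (fun y : (ℤ × ℤ) × (ℤ × ℤ) => p y.1 ^ 2 * q y.2 ^ 2) :=
    hpS.mul_of_nonneg hqS (fun _ => sq_nonneg _) (fun _ => sq_nonneg _)
  have pr : Summable (fun y : (ℤ × ℤ) × (ℤ × ℤ) => p y.1 ^ 2 * r y.2 ^ 2) :=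
    hpS.mul_of_nonneg hrS (fun _ => sq_nonneg _) (fun _ => sq_nonneg _)
  have F1 : HasSum f1 ((∑' k, p k ^ 2) * (∑' k, q k ^ 2)) := by
    rw [hpS.tsum_mul_tsum hqS pq]
    have := (eAB.hasSum_iff).mpr pq.hasSum
    refine this.congr_fun ?_ |> fun h => h
    intro x; simp [hf1, hAB]
  have F2 : HasSum f2 ((∑' k, p k ^ 2) * (∑' k, r k ^ 2)) := by
    rw [hpS.tsum_mul_tsum hrS pr]
    have := (eAC.hasSum_iff).mpr pr.hasSum
    refine this.congr_fun ?_ |> fun h => h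
    intro x; simp [hf2, hAC]
  obtain ⟨iq, iq'⟩ := ind_sum hq0 hq1
  obtain ⟨ir, ir'⟩ := ind_sum hr0 hr1
  have G1 : HasSum g1 (∑' x : (ℤ × ℤ) × (ℤ × ℤ),
      q x.1 ^ 2 * (if rho x.2 ≤ 2 * rho x.1 then (1 : ℝ) else 0)) := by
    have := ((eAB.trans (Equiv.prodComm _ _)).hasSum_iff).mpr iq.hasSum
    refine this.congr_fun ?_ |> fun h => h
    intro x; simp [hg1, hAB]
  have G2 : HasSum g2 (∑' x : (ℤ × ℤ) × (ℤ × ℤ),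
      r x.1 ^ 2 * (if rho x.2 ≤ 2 * rho x.1 then (1 : ℝ) else 0)) := by
    have := ((eAC.trans (Equiv.prodComm _ _)).hasSum_iff).mpr ir.hasSum
    refine this.congr_fun ?_ |> fun h => h
    intro x; simp [hg2, hAC]
  have hnn : ∀ x, 0 ≤ p (A x) * q (B x) * r (C x) := fun x =>
    mul_nonneg (mul_nonneg (hp _) (hq _)) (hr _)
  have hle : ∀ ε > 0, ∀ x, p (A x) * q (B x) * r (C x) ≤
      ε⁻¹ * (f1 x + f2 x) + ε * (g1 x + g2 x) := by
    intro ε hε x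
    exact tri_pt hε (hABC x) _ _ _
  have HS : ∀ ε : ℝ, HasSum (fun x => ε⁻¹ * (f1 x + f2 x) + ε * (g1 x + g2 x)) _ := fun ε =>
    ((F1.add F2).mul_left ε⁻¹).add ((G1.add G2).mul_left ε)
  have hS : Summable (fun x => p (A x) * q (B x) * r (C x)) :=
    Summable.of_nonneg_of_le hnn (hle 1 one_pos) (HS 1).summable
  refine ⟨hS, fun ε hε => ?_⟩
  have := hS.tsum_le_tsum (hle ε hε) (HS ε).summable
  rw [(HS ε).tsum_eq] at this
  refine this.trans ?_
  have h1 := mul_le_mul_of_nonneg_left iq' hε.le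
  have h2 := mul_le_mul_of_nonneg_left ir' hε.le
  rw [← mul_add, mul_assoc ε⁻¹]
  linarith

/-- `(m,n) ↦ (m, m+n)`. -/
def eMK : (ℤ × ℤ) × (ℤ × ℤ) ≃ (ℤ × ℤ) × (ℤ × ℤ) where
  toFun x := (x.1, x.1 + x.2)
  invFun y := (y.1, y.2 - y.1)
  left_inv x := by simp
  right_inv y := by simp

/-- `(m,n) ↦ (n, m+n)`. -/
def eNK : (ℤ × ℤ) × (ℤ × ℤ) ≃ (ℤ × ℤ) × (ℤ × ℤ) where
  toFun x := (x.2, x.1 + x.2)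
  invFun y := (y.2 - y.1, y.1)
  left_inv x := by simp
  right_inv y := by simp

/-- `(m,n) ↦ (-m, m+n)`. -/
def eInv : (ℤ × ℤ) × (ℤ × ℤ) ≃ (ℤ × ℤ) × (ℤ × ℤ) where
  toFun x := (-x.1, x.1 + x.2)
  invFun x := (-x.1, x.1 + x.2)
  left_inv x := by simp
  right_inv y := by simp

end NS2D

namespace NS2D

/-- Multiplier of the nonlinearity. -/
def sg (m n : ℤ × ℤ) : ℝ := crs m n * dts n (m + n) / (rho m * rho n * rho (m + n))

lemma abs_sg_le (m n : ℤ × ℤ) : |sg m n| ≤ rho n := by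
  unfold sg
  have h1 := abs_crs_le m n
  have h2 := abs_dts_le n (m + n)
  have a := rho_nonneg m
  have b := rho_nonneg n
  have c := rho_nonneg (m + n)
  rw [abs_div, abs_mul, abs_of_nonneg (by positivity : 0 ≤ rho m * rho n * rho (m + n))]
  apply div_le_of_le_mul₀ (by positivity) b
  calc |crs m n| * |dts n (m + n)| ≤ (rho m * rho n) * (rho n * rho (m + n)) := by gcongr
    _ = _ := by ring

/-- Nonlinearity on the full lattice. -/
def bz (c : ℤ × ℤ → ℂ) (k : ℤ × ℤ) : ℂ :=
  Complex.I * ∑' m, c m * c (k - m) * ((sg m (k - m) : ℝ) : ℂ)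

/-- The trilinear real quantity. -/
def tt (c : ℤ × ℤ → ℂ) (m n : ℤ × ℤ) : ℝ :=
  (Complex.I * (c m * c n) * (starRingEnd ℂ) (c (m + n))).re

lemma tt_swap (c : ℤ × ℤ → ℂ) (m n : ℤ × ℤ) : tt c n m = tt c m n := by
  unfold tt; rw [mul_comm (c n), add_comm n m]

lemma tt_inv {c : ℤ × ℤ → ℂ} (hc : ∀ k, c (-k) = -(starRingEnd ℂ) (c k)) (m n : ℤ × ℤ) :
    tt c (-m) (m + n) = tt c m n := by
  unfold tt; rw [hc, neg_add_cancel_left]; simp; ring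

lemma abs_tt_le (c : ℤ × ℤ → ℂ) (m n : ℤ × ℤ) :
    |tt c m n| ≤ ‖c m‖ * ‖c n‖ * ‖c (m + n)‖ := by
  unfold tt; refine (Complex.abs_re_le_norm _).trans ?_; simp


lemma le_S1 {c : ℤ × ℤ → ℂ} (h0 : c 0 = 0) (k : ℤ × ℤ) : ‖c k‖ ^ 2 ≤ rho k ^ 2 * ‖c k‖ ^ 2 := by
  by_cases hk : k = 0
  · subst hk; simp [h0]
  · have := one_le_rho hk
    have h2 : 1 ≤ rho k ^ 2 := by nlinarith
    nlinarith [sq_nonneg ‖c k‖]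


lemma le_S2 {c : ℤ × ℤ → ℂ} (h0 : c 0 = 0) (k : ℤ × ℤ) : rho k ^ 2 * ‖c k‖ ^ 2 ≤ rho k ^ 4 * ‖c k‖ ^ 2 := by
  by_cases hk : k = 0
  · subst hk; simp [h0]
  · have := one_le_rho hk
    have h2 : 1 ≤ rho k ^ 2 := by nlinarith
    have h3 : rho k ^ 2 ≤ rho k ^ 4 := by nlinarith
    nlinarith [sq_nonneg ‖c k‖]

lemma sum_S1 {c : ℤ × ℤ → ℂ} (h0 : c 0 = 0)
    (hs : Summable fun k => rho k ^ 4 * ‖c k‖ ^ 2) : Summable fun k => rho k ^ 2 * ‖c k‖ ^ 2 :=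
  Summable.of_nonneg_of_le (fun k => by positivity) (le_S2 h0) hs

lemma sum_S0 {c : ℤ × ℤ → ℂ} (h0 : c 0 = 0)
    (hs : Summable fun k => rho k ^ 4 * ‖c k‖ ^ 2) : Summable fun k => ‖c k‖ ^ 2 :=
  Summable.of_nonneg_of_le (fun k => by positivity) (le_S1 h0) (sum_S1 h0 hs)

lemma inner_summable {c : ℤ × ℤ → ℂ} (h0 : c 0 = 0)
    (hs : Summable fun k => rho k ^ 4 * ‖c k‖ ^ 2) (k : ℤ × ℤ) :
    Summable fun m => ‖c m‖ * ‖c (k - m)‖ * rho (k - m) := by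
  have h1 := sum_S0 h0 hs
  have h2 := (Equiv.subLeft k).summable_iff.mpr (sum_S1 h0 hs)
  refine Summable.of_nonneg_of_le (fun m => ?_) (fun m => ?_) (h1.add h2)
  · have := rho_nonneg (k - m); positivity
  · simp only [Function.comp, Equiv.subLeft_apply]
    nlinarith [sq_nonneg (‖c m‖ - ‖c (k - m)‖ * rho (k - m)), sq_nonneg (‖c m‖),
      sq_nonneg (‖c (k - m)‖ * rho (k - m))]

lemma inner_summableC {c : ℤ × ℤ → ℂ} (h0 : c 0 = 0)
    (hs : Summable fun k => rho k ^ 4 * ‖c k‖ ^ 2) (k : ℤ × ℤ) :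
    Summable fun m => c m * c (k - m) * ((sg m (k - m) : ℝ) : ℂ) := by
  refine Summable.of_norm_bounded (inner_summable h0 hs k) (fun m => ?_)
  rw [norm_mul, norm_mul, Complex.norm_real, Real.norm_eq_abs]
  gcongr
  exact abs_sg_le m (k - m)

lemma norm_bz_le {c : ℤ × ℤ → ℂ} (h0 : c 0 = 0)
    (hs : Summable fun k => rho k ^ 4 * ‖c k‖ ^ 2) (k : ℤ × ℤ) :
    ‖bz c k‖ ≤ ∑' m, ‖c m‖ * ‖c (k - m)‖ * rho (k - m) := by
  unfold bz
  rw [norm_mul, Complex.norm_I, one_mul]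
  refine tsum_of_norm_bounded (inner_summable h0 hs k).hasSum (fun m => ?_)
  rw [norm_mul, norm_mul, Complex.norm_real, Real.norm_eq_abs]
  gcongr
  exact abs_sg_le m (k - m)

lemma re_bz {c : ℤ × ℤ → ℂ} (h0 : c 0 = 0)
    (hs : Summable fun k => rho k ^ 4 * ‖c k‖ ^ 2) (k : ℤ × ℤ) :
    HasSum (fun m => sg m (k - m) * tt c m (k - m)) (bz c k * (starRingEnd ℂ) (c k)).re := by
  have h := Complex.hasSum_re
    (((inner_summableC h0 hs k).hasSum.mul_left Complex.I).mul_right ((starRingEnd ℂ) (c k)))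
  refine h.congr_fun ?_
  intro m
  unfold tt
  rw [add_sub_cancel, ← Complex.re_ofReal_mul]
  congr 1
  ring

/-- summability of the triple sum. -/
lemma tri_k {c : ℤ × ℤ → ℂ} (h0 : c 0 = 0) (hs : Summable fun k => rho k ^ 4 * ‖c k‖ ^ 2) :
    Summable (fun x : (ℤ × ℤ) × (ℤ × ℤ) =>
      rho (x.1 + x.2) ^ 2 * ‖c (x.1 + x.2)‖ * ‖c x.1‖ * (rho x.2 * ‖c x.2‖)) ∧
    ∑' x : (ℤ × ℤ) × (ℤ × ℤ),
      rho (x.1 + x.2) ^ 2 * ‖c (x.1 + x.2)‖ * ‖c x.1‖ * (rho x.2 * ‖c x.2‖) ≤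
      50 * (1 + ∑' k, rho k ^ 2 * ‖c k‖ ^ 2) * ∑' k, rho k ^ 4 * ‖c k‖ ^ 2 := by
  have hS1 := sum_S1 h0 hs
  have hS0 := sum_S0 h0 hs
  have e4 : ∀ k, (rho k ^ 2 * ‖c k‖) ^ 2 = rho k ^ 4 * ‖c k‖ ^ 2 := fun k => by ring
  have e2 : ∀ k, (rho k * ‖c k‖) ^ 2 = rho k ^ 2 * ‖c k‖ ^ 2 := fun k => by ring
  have e4' : ∀ k, rho k ^ 2 * (rho k * ‖c k‖) ^ 2 = rho k ^ 4 * ‖c k‖ ^ 2 := fun k => by ring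
  have := tri (A := fun x => x.1 + x.2) (B := fun x => x.1) (C := fun x => x.2)
    (eMK.trans (Equiv.prodComm _ _)) (eNK.trans (Equiv.prodComm _ _))
    (fun x => rfl) (fun x => rfl) (fun x => rho_add_le _ _)
    (p := fun k => rho k ^ 2 * ‖c k‖) (q := fun k => ‖c k‖) (r := fun k => rho k * ‖c k‖)
    (fun k => by positivity) (fun k => by positivity)
    (fun k => mul_nonneg (rho_nonneg _) (norm_nonneg _)) (by simp [h0]) (by simp [h0])
    (by simpa only [e4] using hs) hS0 (by simpa only [e2] using hS1) hS1
    (by simpa only [e4'] using hs)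
  refine ⟨this.1, (this.2 1 one_pos).trans ?_⟩
  clear this
  simp only [e4, e4']
  simp only [e2]
  have l1 : ∑' k, ‖c k‖ ^ 2 ≤ ∑' k, rho k ^ 2 * ‖c k‖ ^ 2 := hS0.tsum_le_tsum (le_S1 h0) hS1
  have l2 : ∑' k, rho k ^ 2 * ‖c k‖ ^ 2 ≤ ∑' k, rho k ^ 4 * ‖c k‖ ^ 2 :=
    hS1.tsum_le_tsum (le_S2 h0) hs
  have l0 : 0 ≤ ∑' k, ‖c k‖ ^ 2 := tsum_nonneg fun k => by positivity
  generalize ∑' k, ‖c k‖ ^ 2 = s0 at *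
  generalize ∑' k, rho k ^ 2 * ‖c k‖ ^ 2 = s1 at *
  generalize ∑' k, rho k ^ 4 * ‖c k‖ ^ 2 = s2 at *
  nlinarith

lemma tri_n {c : ℤ × ℤ → ℂ} (h0 : c 0 = 0) (hs : Summable fun k => rho k ^ 4 * ‖c k‖ ^ 2) :
    Summable (fun x : (ℤ × ℤ) × (ℤ × ℤ) =>
      rho x.2 ^ 2 * ‖c x.2‖ * ‖c x.1‖ * (rho (x.1 + x.2) * ‖c (x.1 + x.2)‖)) := by
  have hS1 := sum_S1 h0 hs
  have hS0 := sum_S0 h0 hs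
  have e4 : ∀ k, (rho k ^ 2 * ‖c k‖) ^ 2 = rho k ^ 4 * ‖c k‖ ^ 2 := fun k => by ring
  have e2 : ∀ k, (rho k * ‖c k‖) ^ 2 = rho k ^ 2 * ‖c k‖ ^ 2 := fun k => by ring
  have e4' : ∀ k, rho k ^ 2 * (rho k * ‖c k‖) ^ 2 = rho k ^ 4 * ‖c k‖ ^ 2 := fun k => by ring
  have := tri (A := fun x => x.2) (B := fun x => x.1) (C := fun x => x.1 + x.2)
    (Equiv.prodComm _ _) eNK
    (fun x => rfl) (fun x => rfl) (fun x => rho_le_add1 _ _)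
    (p := fun k => rho k ^ 2 * ‖c k‖) (q := fun k => ‖c k‖) (r := fun k => rho k * ‖c k‖)
    (fun k => by positivity) (fun k => by positivity)
    (fun k => mul_nonneg (rho_nonneg _) (norm_nonneg _)) (by simp [h0]) (by simp [h0])
    (by simpa only [e4] using hs) hS0 (by simpa only [e2] using hS1) hS1
    (by simpa only [e4'] using hs)
  exact this.1

/-- The map `(m,n) ↦ (m+n, m)`. -/
abbrev eKM : (ℤ × ℤ) × (ℤ × ℤ) ≃ (ℤ × ℤ) × (ℤ × ℤ) := eMK.trans (Equiv.prodComm _ _)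

lemma fub {G X : (ℤ × ℤ) × (ℤ × ℤ) → ℝ} (hGe : ∀ m n, G (m + n, m) = X (m, n))
    (hX : Summable X) : Summable G ∧ ∑' y, G y = ∑' x, X x := by
  have h : HasSum X (∑' x, X x) := hX.hasSum
  have e : G ∘ eKM = X := by
    funext x; exact hGe x.1 x.2
  rw [← e, eKM.hasSum_iff, e] at h
  exact ⟨h.summable, h.tsum_eq⟩

/-- absolute bound of the nonlinear energy terms -/
lemma K1 {c : ℤ × ℤ → ℂ} (h0 : c 0 = 0) (hs : Summable fun k => rho k ^ 4 * ‖c k‖ ^ 2) :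
    Summable (fun k => rho k ^ 2 * (‖c k‖ * ‖bz c k‖)) ∧
    ∑' k, rho k ^ 2 * (‖c k‖ * ‖bz c k‖) ≤
      50 * (1 + ∑' k, rho k ^ 2 * ‖c k‖ ^ 2) * ∑' k, rho k ^ 4 * ‖c k‖ ^ 2 := by
  obtain ⟨hS, hB⟩ := tri_k h0 hs
  set G : (ℤ × ℤ) × (ℤ × ℤ) → ℝ := fun y =>
    rho y.1 ^ 2 * ‖c y.1‖ * (‖c y.2‖ * ‖c (y.1 - y.2)‖ * rho (y.1 - y.2)) with hG
  obtain ⟨hGS, hGX⟩ := fub (G := G) (X := fun x : (ℤ × ℤ) × (ℤ × ℤ) =>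
      rho (x.1 + x.2) ^ 2 * ‖c (x.1 + x.2)‖ * ‖c x.1‖ * (rho x.2 * ‖c x.2‖))
    (fun m n => by simp only [hG, add_sub_cancel_left]; ring) hS
  have hin : ∀ k, Summable fun m => G (k, m) := fun k =>
    (inner_summable h0 hs k).mul_left (rho k ^ 2 * ‖c k‖)
  have hGt : ∑' y, G y = ∑' k, rho k ^ 2 * ‖c k‖ * ∑' m, ‖c m‖ * ‖c (k - m)‖ * rho (k - m) := by
    rw [hGS.tsum_prod' hin]
    congr 1; funext k; rw [← tsum_mul_left]
  have hG2 : Summable fun k =>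
      rho k ^ 2 * ‖c k‖ * ∑' m, ‖c m‖ * ‖c (k - m)‖ * rho (k - m) := by
    have := hGS.prod
    refine this.congr (fun k => ?_)
    rw [← tsum_mul_left]
  have hle : ∀ k, rho k ^ 2 * (‖c k‖ * ‖bz c k‖) ≤
      rho k ^ 2 * ‖c k‖ * ∑' m, ‖c m‖ * ‖c (k - m)‖ * rho (k - m) := by
    intro k
    rw [← mul_assoc]
    exact mul_le_mul_of_nonneg_left (norm_bz_le h0 hs k) (by positivity)
  have hf : Summable (fun k => rho k ^ 2 * (‖c k‖ * ‖bz c k‖)) :=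
    Summable.of_nonneg_of_le (fun k => by positivity) hle hG2
  refine ⟨hf, ?_⟩
  calc _ ≤ _ := hf.tsum_le_tsum hle hG2
    _ = ∑' y, G y := hGt.symm
    _ ≤ _ := by rw [hGX]; exact hB

lemma w_alg {ωm ωn ωk c2 : ℝ} (hm : 0 ≤ ωm) (hn : 0 ≤ ωn) (hk : 0 ≤ ωk) (hc : 0 ≤ c2)
    (h2 : ωk ≤ c2 * (ωm + ωn)) (h2' : ωn ≤ c2 * (ωm + ωk)) :
    (ωk + ωn) ^ 2 ≤ (2 * c2 + 2) * (ωn * ωk + ωm * ωk + ωm * ωn) := by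
  have a := mul_le_mul_of_nonneg_left h2 hk
  have b := mul_le_mul_of_nonneg_left h2' hn
  have p1 := mul_nonneg hm hk
  have p2 := mul_nonneg hm hn
  nlinarith [mul_nonneg hc p1, mul_nonneg hc p2]

lemma w_alg2 {ωn ωk c1 J rm rn rk : ℝ} (hn : 0 ≤ ωn) (hk : 0 ≤ ωk)
    (hrm : 0 ≤ rm) (hrn : 0 ≤ rn) (hrk : 0 ≤ rk) (hc1 : 0 ≤ c1)
    (hJ1 : |J| ≤ rm * rn) (hJ2 : |J| ≤ rm * rk)
    (h1 : |ωk - ωn| * min rn rk ≤ c1 * rm * (ωn + ωk)) :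
    |(ωk ^ 2 - ωn ^ 2) * (rk * rn * J / rm)| ≤ c1 * (ωk + ωn) ^ 2 * (rm * rn * rk) := by
  rcases hrm.eq_or_lt with h | h
  · subst h; simp
  have hJ : |J| / rm ≤ min rn rk := by
    rw [div_le_iff₀ h]
    rcases le_total rn rk with h' | h'
    · rw [min_eq_left h']; linarith
    · rw [min_eq_right h']; linarith
  have e : |(ωk ^ 2 - ωn ^ 2) * (rk * rn * J / rm)| =
      (|ωk - ωn| * (|J| / rm)) * (ωk + ωn) * (rk * rn) := by
    have : ωk ^ 2 - ωn ^ 2 = (ωk - ωn) * (ωk + ωn) := by ring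
    rw [this, abs_mul, abs_mul, abs_div, abs_mul, abs_mul, abs_of_nonneg hrk, abs_of_nonneg hrn,
      abs_of_pos h, abs_of_nonneg (by positivity : 0 ≤ ωk + ωn)]
    ring
  rw [e]
  have : |ωk - ωn| * (|J| / rm) ≤ c1 * rm * (ωn + ωk) :=
    (mul_le_mul_of_nonneg_left hJ (abs_nonneg _)).trans h1
  calc _ ≤ (c1 * rm * (ωn + ωk)) * (ωk + ωn) * (rk * rn) := by gcongr
    _ = _ := by ring

set_option maxHeartbeats 1000000 in
/-- the weighted energy estimate for the nonlinearity -/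
lemma K2 {c : ℤ × ℤ → ℂ} (h0 : c 0 = 0) (hs : Summable fun k => rho k ^ 4 * ‖c k‖ ^ 2)
    (hc : ∀ k, c (-k) = -(starRingEnd ℂ) (c k))
    {ω : ℤ × ℤ → ℝ} {Ω c1 c2 : ℝ} (hω0 : ∀ k, 0 ≤ ω k) (hωΩ : ∀ k, ω k ≤ Ω)
    (hc1 : 0 ≤ c1) (hc2 : 0 ≤ c2)
    (h1 : ∀ m n, |ω (m + n) - ω n| * min (rho n) (rho (m + n)) ≤
      c1 * rho m * (ω n + ω (m + n)))
    (h2 : ∀ m n, ω (m + n) ≤ c2 * (ω m + ω n))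
    (h2' : ∀ m n, ω n ≤ c2 * (ω m + ω (m + n))) {ε : ℝ} (hε : 0 < ε) :
    |∑' k, rho k ^ 2 * ω k ^ 2 * (bz c k * (starRingEnd ℂ) (c k)).re| ≤
      c1 * (c2 + 1) * (6 * ε⁻¹ * (∑' k, rho k ^ 2 * ‖c k‖ ^ 2) *
          (∑' k, rho k ^ 2 * ω k ^ 2 * ‖c k‖ ^ 2) +
        150 * ε * ∑' k, rho k ^ 4 * ω k ^ 2 * ‖c k‖ ^ 2) := by
  have hS1 := sum_S1 h0 hs
  have hΩ0 : 0 ≤ Ω := (hω0 0).trans (hωΩ 0)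
  have hωsq : ∀ k, ω k ^ 2 ≤ Ω ^ 2 := fun k => pow_le_pow_left₀ (hω0 k) (hωΩ k) 2
  -- the three pair families
  set X0 : (ℤ × ℤ) × (ℤ × ℤ) → ℝ := fun x =>
    rho (x.1 + x.2) ^ 2 * ω (x.1 + x.2) ^ 2 * (sg x.1 x.2 * tt c x.1 x.2) with hX0
  set X1 : (ℤ × ℤ) × (ℤ × ℤ) → ℝ := fun x =>
    ω (x.1 + x.2) ^ 2 * (rho (x.1 + x.2) * rho x.2 * crs x.1 x.2 / rho x.1) * tt c x.1 x.2 with hX1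
  set X1' : (ℤ × ℤ) × (ℤ × ℤ) → ℝ := fun x =>
    ω x.2 ^ 2 * (rho (x.1 + x.2) * rho x.2 * crs x.1 x.2 / rho x.1) * tt c x.1 x.2 with hX1'
  set X2 : (ℤ × ℤ) × (ℤ × ℤ) → ℝ := fun x =>
    ω (x.1 + x.2) ^ 2 * (rho (x.1 + x.2) * crs x.1 x.2 * dts x.2 x.1 / (rho x.1 * rho x.2)) *
      tt c x.1 x.2 with hX2
  have hsplit : ∀ x, X0 x = X1 x + X2 x := by
    intro x
    by_cases hn : x.2 = 0
    · have : tt c x.1 x.2 = 0 := by simp [tt, hn, h0]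
      simp [hX0, hX1, hX2, this]
    by_cases hm : x.1 = 0
    · have : tt c x.1 x.2 = 0 := by simp [tt, hm, h0]
      simp [hX0, hX1, hX2, this]
    by_cases hk : x.1 + x.2 = 0
    · have : tt c x.1 x.2 = 0 := by simp [tt, hk, h0]
      simp [hX0, hX1, hX2, this]
    have a := one_le_rho hm
    have b := one_le_rho hn
    have d := one_le_rho hk
    have a' : rho x.1 ≠ 0 := by linarith
    have b' : rho x.2 ≠ 0 := by linarith
    have d' : rho (x.1 + x.2) ≠ 0 := by linarith
    simp only [hX0, hX1, hX2, sg, dts_add]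
    field_simp
  have hX0S : Summable X0 := by
    refine Summable.of_norm_bounded ((tri_k h0 hs).1.mul_left (Ω ^ 2)) (fun x => ?_)
    simp only [hX0, Real.norm_eq_abs, abs_mul]
    rw [abs_of_nonneg (sq_nonneg (rho (x.1 + x.2))), abs_of_nonneg (sq_nonneg (ω (x.1 + x.2)))]
    have e1 := abs_sg_le x.1 x.2
    have e2 := abs_tt_le c x.1 x.2
    have e3 := hωsq (x.1 + x.2)
    have e4 := rho_nonneg x.2
    calc rho (x.1 + x.2) ^ 2 * ω (x.1 + x.2) ^ 2 * (|sg x.1 x.2| * |tt c x.1 x.2|)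
        ≤ rho (x.1 + x.2) ^ 2 * Ω ^ 2 *
          (rho x.2 * (‖c x.1‖ * ‖c x.2‖ * ‖c (x.1 + x.2)‖)) := by gcongr
      _ = _ := by ring
  have hX1S : Summable X1 := by
    refine Summable.of_norm_bounded ((tri_n h0 hs).mul_left (Ω ^ 2)) (fun x => ?_)
    simp only [hX1, Real.norm_eq_abs, abs_mul, abs_div]
    rw [abs_of_nonneg (rho_nonneg (x.1 + x.2)), abs_of_nonneg (sq_nonneg (ω (x.1 + x.2))),
      abs_of_nonneg (rho_nonneg x.1), abs_of_nonneg (rho_nonneg x.2)]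
    have e1 : |crs x.1 x.2| / rho x.1 ≤ rho x.2 := by
      apply div_le_of_le_mul₀ (rho_nonneg _) (rho_nonneg _)
      rw [mul_comm]; exact abs_crs_le _ _
    have e2 := abs_tt_le c x.1 x.2
    have e3 := hωsq (x.1 + x.2)
    have e4 := rho_nonneg x.2
    have e5 := rho_nonneg (x.1 + x.2)
    have e6 : 0 ≤ |crs x.1 x.2| / rho x.1 := div_nonneg (abs_nonneg _) (rho_nonneg _)
    calc ω (x.1 + x.2) ^ 2 * (rho (x.1 + x.2) * rho x.2 * |crs x.1 x.2| / rho x.1) *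
          |tt c x.1 x.2|
        = ω (x.1 + x.2) ^ 2 * (rho (x.1 + x.2) * rho x.2 * (|crs x.1 x.2| / rho x.1)) *
          |tt c x.1 x.2| := by ring
      _ ≤ Ω ^ 2 * (rho (x.1 + x.2) * rho x.2 * rho x.2) *
          (‖c x.1‖ * ‖c x.2‖ * ‖c (x.1 + x.2)‖) := by gcongr
      _ = _ := by ring
  have hX2S : Summable X2 := by
    have := hX0S.sub hX1S
    refine this.congr (fun x => ?_)
    rw [hsplit]; ring
  have hX2z : ∑' x, X2 x = 0 := by
    have e := (Equiv.prodComm (ℤ × ℤ) (ℤ × ℤ)).tsum_eq X2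
    have e' : ∀ x, X2 (Equiv.prodComm (ℤ × ℤ) (ℤ × ℤ) x) = - X2 x := by
      intro x
      simp only [hX2, Equiv.prodComm_apply, Prod.fst_swap, Prod.snd_swap]
      rw [tt_swap, crs_swap, dts_swap x.2 x.1, add_comm x.2 x.1, mul_comm (rho x.2)]
      ring
    simp only [e', tsum_neg] at e
    linarith
  have hinv : ∀ x, X1 (eInv x) = - X1' x := by
    intro x
    simp only [hX1, hX1', eInv, Equiv.coe_fn_mk]
    rw [tt_inv hc, crs_inv, neg_add_cancel_left, rho_neg]
    ring
  have hX1'S : Summable X1' := by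
    have := eInv.summable_iff.mpr hX1S
    refine this.neg.congr (fun x => ?_)
    simp [Function.comp, hinv]
  have hX1t : ∑' x, X1 x = - ∑' x, X1' x := by
    rw [← eInv.tsum_eq X1, ← tsum_neg]; congr 1; funext x; exact hinv x
  have hhalf : ∑' x, X0 x = (1 / 2) * ∑' x, (X1 x - X1' x) := by
    have : ∑' x, X0 x = ∑' x, X1 x + ∑' x, X2 x := by
      rw [← hX1S.tsum_add hX2S]; congr 1; funext x; exact hsplit x
    rw [hX1S.tsum_sub hX1'S, this, hX2z]; linarith
  -- relation with the sum over k
  have hlhs : ∑' k, rho k ^ 2 * ω k ^ 2 * (bz c k * (starRingEnd ℂ) (c k)).re = ∑' x, X0 x := by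
    set G : (ℤ × ℤ) × (ℤ × ℤ) → ℝ := fun y =>
      rho y.1 ^ 2 * ω y.1 ^ 2 * (sg y.2 (y.1 - y.2) * tt c y.2 (y.1 - y.2)) with hG
    obtain ⟨hGS, hGX⟩ := fub (G := G) (X := X0)
      (fun m n => by simp only [hG, hX0, add_sub_cancel_left]) hX0S
    rw [← hGX, hGS.tsum_prod' (fun k =>
      (re_bz h0 hs k).summable.mul_left (rho k ^ 2 * ω k ^ 2))]
    congr 1; funext k
    exact ((re_bz h0 hs k).mul_left _).tsum_eq.symm
  rw [hlhs, hhalf, abs_mul, abs_of_pos (by norm_num : (0 : ℝ) < 1 / 2)]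
  -- the weights
  have z0 : ∀ k, 0 ≤ rho k * ‖c k‖ := fun k => mul_nonneg (rho_nonneg _) (norm_nonneg _)
  have y0 : ∀ k, 0 ≤ ω k * (rho k * ‖c k‖) := fun k => mul_nonneg (hω0 _) (z0 k)
  have e2 : ∀ k, (rho k * ‖c k‖) ^ 2 = rho k ^ 2 * ‖c k‖ ^ 2 := fun k => by ring
  have eE : ∀ k, (ω k * (rho k * ‖c k‖)) ^ 2 = rho k ^ 2 * ω k ^ 2 * ‖c k‖ ^ 2 := fun k => by ring
  have eD : ∀ k, rho k ^ 2 * (ω k * (rho k * ‖c k‖)) ^ 2 = rho k ^ 4 * ω k ^ 2 * ‖c k‖ ^ 2 :=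
    fun k => by ring
  have hES : Summable fun k => rho k ^ 2 * ω k ^ 2 * ‖c k‖ ^ 2 := by
    refine Summable.of_nonneg_of_le (fun k => by positivity) (fun k => ?_) (hS1.mul_left (Ω ^ 2))
    have := hωsq k
    calc rho k ^ 2 * ω k ^ 2 * ‖c k‖ ^ 2 ≤ rho k ^ 2 * Ω ^ 2 * ‖c k‖ ^ 2 := by gcongr
      _ = _ := by ring
  have hDS : Summable fun k => rho k ^ 4 * ω k ^ 2 * ‖c k‖ ^ 2 := by
    refine Summable.of_nonneg_of_le (fun k => by positivity) (fun k => ?_) (hs.mul_left (Ω ^ 2))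
    have := hωsq k
    calc rho k ^ 4 * ω k ^ 2 * ‖c k‖ ^ 2 ≤ rho k ^ 4 * Ω ^ 2 * ‖c k‖ ^ 2 := by gcongr
      _ = _ := by ring
  have T : ∀ {A B C : (ℤ × ℤ) × (ℤ × ℤ) → ℤ × ℤ}
    (eAB eAC : (ℤ × ℤ) × (ℤ × ℤ) ≃ (ℤ × ℤ) × (ℤ × ℤ))
    (_ : ∀ x, eAB x = (A x, B x)) (_ : ∀ x, eAC x = (A x, C x))
    (_ : ∀ x, rho (A x) ≤ rho (B x) + rho (C x)), _ :=
    fun {A B C} eAB eAC hAB hAC hABC => tri (A := A) (B := B) (C := C) eAB eAC hAB hAC hABC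
      (p := fun k => rho k * ‖c k‖) (q := fun k => ω k * (rho k * ‖c k‖))
      (r := fun k => ω k * (rho k * ‖c k‖)) z0 y0 y0 (by simp [h0]) (by simp [h0])
      (by simpa only [e2] using hS1) (by simpa only [eE] using hES) (by simpa only [eE] using hES)
      (by simpa only [eD] using hDS) (by simpa only [eD] using hDS)
  obtain ⟨s1, b1⟩ := T (A := fun x => x.1) (B := fun x => x.2) (C := fun x => x.1 + x.2)
    (Equiv.refl _) eMK (fun x => rfl) (fun x => rfl) (fun x => rho_le_add2 _ _)
  obtain ⟨s2, b2⟩ := T (A := fun x => x.2) (B := fun x => x.1) (C := fun x => x.1 + x.2)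
    (Equiv.prodComm _ _) eNK (fun x => rfl) (fun x => rfl) (fun x => rho_le_add1 _ _)
  obtain ⟨s3, b3⟩ := T (A := fun x => x.1 + x.2) (B := fun x => x.1) (C := fun x => x.2)
    eKM (eNK.trans (Equiv.prodComm _ _)) (fun x => rfl) (fun x => rfl) (fun x => rho_add_le _ _)
  replace b1 := b1 ε hε
  replace b2 := b2 ε hε
  replace b3 := b3 ε hε
  simp only [eD] at b1 b2 b3
  simp only [e2, eE] at b1 b2 b3
  have hpt : ∀ x : (ℤ × ℤ) × (ℤ × ℤ), ‖X1 x - X1' x‖ ≤ c1 * (2 * c2 + 2) *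
      ((rho x.1 * ‖c x.1‖ * (ω x.2 * (rho x.2 * ‖c x.2‖)) *
          (ω (x.1 + x.2) * (rho (x.1 + x.2) * ‖c (x.1 + x.2)‖)) +
        rho x.2 * ‖c x.2‖ * (ω x.1 * (rho x.1 * ‖c x.1‖)) *
          (ω (x.1 + x.2) * (rho (x.1 + x.2) * ‖c (x.1 + x.2)‖))) +
        rho (x.1 + x.2) * ‖c (x.1 + x.2)‖ * (ω x.1 * (rho x.1 * ‖c x.1‖)) *
          (ω x.2 * (rho x.2 * ‖c x.2‖))) := by
    intro x
    have ea : X1 x - X1' x = (ω (x.1 + x.2) ^ 2 - ω x.2 ^ 2) *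
        (rho (x.1 + x.2) * rho x.2 * crs x.1 x.2 / rho x.1) * tt c x.1 x.2 := by
      simp only [hX1, hX1']; ring
    rw [ea, Real.norm_eq_abs, abs_mul]
    have g1 := w_alg2 (hω0 x.2) (hω0 (x.1 + x.2)) (rho_nonneg x.1) (rho_nonneg x.2)
      (rho_nonneg (x.1 + x.2)) hc1 (abs_crs_le x.1 x.2) (abs_crs_le' x.1 x.2) (h1 x.1 x.2)
    have g2 := w_alg (hω0 x.1) (hω0 x.2) (hω0 (x.1 + x.2)) hc2 (h2 x.1 x.2) (h2' x.1 x.2)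
    have g3 := abs_tt_le c x.1 x.2
    have r1 := rho_nonneg x.1
    have r2 := rho_nonneg x.2
    have r3 := rho_nonneg (x.1 + x.2)
    refine (mul_le_mul g1 g3 (abs_nonneg _) (by positivity)).trans ?_
    calc c1 * (ω (x.1 + x.2) + ω x.2) ^ 2 * (rho x.1 * rho x.2 * rho (x.1 + x.2)) *
          (‖c x.1‖ * ‖c x.2‖ * ‖c (x.1 + x.2)‖)
        ≤ c1 * ((2 * c2 + 2) * (ω x.2 * ω (x.1 + x.2) + ω x.1 * ω (x.1 + x.2) + ω x.1 * ω x.2)) *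
          (rho x.1 * rho x.2 * rho (x.1 + x.2)) *
          (‖c x.1‖ * ‖c x.2‖ * ‖c (x.1 + x.2)‖) := by gcongr
      _ = _ := by ring
  have hb := tsum_of_norm_bounded (((s1.add s2).add s3).mul_left (c1 * (2 * c2 + 2))).hasSum hpt
  rw [Real.norm_eq_abs] at hb
  rw [tsum_mul_left, (s1.add s2).tsum_add s3, s1.tsum_add s2] at hb
  generalize ∑' k, rho k ^ 2 * ‖c k‖ ^ 2 = S at *
  generalize ∑' k, rho k ^ 2 * ω k ^ 2 * ‖c k‖ ^ 2 = E at *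
  generalize ∑' k, rho k ^ 4 * ω k ^ 2 * ‖c k‖ ^ 2 = D at *
  have hcc : 0 ≤ c1 * (2 * c2 + 2) := by positivity
  have hfin := hb.trans (mul_le_mul_of_nonneg_left (add_le_add (add_le_add b1 b2) b3) hcc)
  calc 1 / 2 * |∑' x, (X1 x - X1' x)| ≤ 1 / 2 * _ :=
        mul_le_mul_of_nonneg_left hfin (by norm_num)
    _ = _ := by ring

end NS2D

namespace NS2D

lemma sum_inv4 : Summable fun k : ℤ × ℤ => (rho k ^ 4)⁻¹ := by
  have h1 : Summable fun n : ℤ => ((1 : ℝ) + (n : ℝ) ^ 2)⁻¹ := by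
    have h2 : Summable fun n : ℤ => (1 : ℝ) / (n : ℝ) ^ 2 :=
      Real.summable_one_div_int_pow.mpr (by norm_num)
    have h3 : Summable fun n : ℤ => ((if n = 0 then 1 else 0 : ℝ)) + (1 : ℝ) / (n : ℝ) ^ 2 := by
      refine Summable.add ?_ h2
      exact summable_of_ne_finset_zero (s := {0}) (fun b hb => by simp at hb; simp [hb])
    refine Summable.of_nonneg_of_le (fun n => by positivity) (fun n => ?_) h3
    by_cases hn : n = 0
    · simp [hn]
    · have : (0 : ℝ) < (n : ℝ) ^ 2 := by
        have : (n : ℝ) ≠ 0 := by exact_mod_cast hn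
        positivity
      simp only [hn, if_false, zero_add, one_div]
      exact inv_anti₀ this (by linarith)
  have h4 := h1.mul_of_nonneg h1 (fun n => by positivity) (fun n => by positivity)
  refine Summable.of_nonneg_of_le (fun k => by positivity) (fun k => ?_) (h4.mul_left 3)
  by_cases hk : k = 0
  · subst hk; rw [rho_zero]; simp
  have a := one_le_isum hk
  have b := isum_le k
  have e1 := sq_nonneg (k.1 : ℝ)
  have e2 := sq_nonneg (k.2 : ℝ)
  rw [← mul_inv, ← div_eq_mul_inv, inv_eq_one_div,
    div_le_div_iff₀ (by have := one_le_rho hk; positivity) (by positivity)]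
  have : rho k ^ 4 = (rho k ^ 2) ^ 2 := by ring
  rw [this]
  generalize rho k ^ 2 = R at *
  generalize (k.1 : ℝ) ^ 2 = x at *
  generalize (k.2 : ℝ) ^ 2 = y at *
  have : (x + y) ^ 2 ≤ R ^ 2 := by gcongr
  nlinarith [mul_nonneg e1 e2]

lemma cs {ι : Type*} {f g : ι → ℝ} (hf : Summable fun i => f i ^ 2)
    (hg : Summable fun i => g i ^ 2) :
    Summable (fun i => f i * g i) ∧
      (∑' i, f i * g i) ^ 2 ≤ (∑' i, f i ^ 2) * ∑' i, g i ^ 2 := by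
  have hfg : Summable (fun i => f i * g i) := by
    refine Summable.of_norm_bounded (hf.add hg) (fun i => ?_)
    rw [Real.norm_eq_abs, abs_le]
    constructor <;> nlinarith [sq_nonneg (f i + g i), sq_nonneg (f i - g i), sq_nonneg (f i),
      sq_nonneg (g i)]
  refine ⟨hfg, ?_⟩
  have := hfg.hasSum.pow 2
  refine le_of_tendsto' this (fun F => ?_)
  refine (Finset.sum_mul_sq_le_sq_mul_sq F f g).trans ?_
  exact mul_le_mul (hf.sum_le_tsum F (fun i _ => sq_nonneg _))
    (hg.sum_le_tsum F (fun i _ => sq_nonneg _)) (Finset.sum_nonneg fun i _ => sq_nonneg _)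
    (tsum_nonneg fun i => sq_nonneg _)

set_option maxHeartbeats 1000000 in
lemma K3 (s : ℕ) : ∃ C : ℝ, 0 ≤ C ∧ ∀ c : ℤ × ℤ → ℂ, c 0 = 0 →
    (Summable fun k => rho k ^ 4 * ‖c k‖ ^ 2) →
    (Summable fun k => rho k ^ (2 * (s + 1)) * ‖c k‖ ^ 2) →
    (Summable fun k => rho k ^ (2 * s) * ‖bz c k‖ ^ 2) ∧
    ∑' k, rho k ^ (2 * s) * ‖bz c k‖ ^ 2 ≤
      C * (∑' k, rho k ^ 4 * ‖c k‖ ^ 2) * ∑' k, rho k ^ (2 * (s + 1)) * ‖c k‖ ^ 2 := by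
  refine ⟨(2 ^ (s + 1)) ^ 2 * ∑' k : ℤ × ℤ, (rho k ^ 4)⁻¹, ?_, ?_⟩
  · have : 0 ≤ ∑' k : ℤ × ℤ, (rho k ^ 4)⁻¹ := tsum_nonneg fun k => by positivity
    positivity
  intro c h0 hs hS
  set h : ℤ × ℤ → ℝ := fun k => rho k ^ (s + 1) * ‖c k‖ with hh
  have hh0 : ∀ k, 0 ≤ h k := fun k => mul_nonneg (pow_nonneg (rho_nonneg _) _) (norm_nonneg _)
  have eh : ∀ k, h k ^ 2 = rho k ^ (2 * (s + 1)) * ‖c k‖ ^ 2 := fun k => by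
    simp only [hh]; ring
  have hS' : Summable fun k => h k ^ 2 := by simpa only [eh] using hS
  have hSk : ∀ k, Summable fun m => h (k - m) ^ 2 := fun k =>
    (Equiv.subLeft k).summable_iff.mpr hS'
  have hS0 := sum_S0 h0 hs
  have hD : ∀ k, Summable fun m => ‖c m‖ * h (k - m) := fun k => (cs hS0 (hSk k)).1
  set D : ℤ × ℤ → ℝ := fun k => ∑' m, ‖c m‖ * h (k - m) with hDd
  have hD0 : ∀ k, 0 ≤ D k := fun k => tsum_nonneg fun m => mul_nonneg (norm_nonneg _) (hh0 _)
  have hD' : ∀ k, HasSum (fun m => ‖c (k - m)‖ * h m) (D k) := by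
    intro k
    have := ((Equiv.subLeft k).hasSum_iff (f := fun m => ‖c m‖ * h (k - m)) (a := D k)).mpr
      (hD k).hasSum
    refine this.congr_fun ?_
    intro m
    simp [Function.comp]
  have hb : ∀ k, rho k ^ s * ‖bz c k‖ ≤ 2 ^ (s + 1) * D k := by
    intro k
    have i1 := norm_bz_le h0 hs k
    calc rho k ^ s * ‖bz c k‖ ≤ rho k ^ s * ∑' m, ‖c m‖ * ‖c (k - m)‖ * rho (k - m) :=
          mul_le_mul_of_nonneg_left i1 (pow_nonneg (rho_nonneg _) _)
      _ = ∑' m, rho k ^ s * (‖c m‖ * ‖c (k - m)‖ * rho (k - m)) := by rw [tsum_mul_left]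
      _ ≤ ∑' m, 2 ^ s * (‖c m‖ * h (k - m) + ‖c (k - m)‖ * h m) := by
          refine Summable.tsum_le_tsum (fun m => ?_) ((inner_summable h0 hs k).mul_left _)
            (((hD k).add (hD' k).summable).mul_left _)
          have r1 := rho_nonneg m
          have r2 := rho_nonneg (k - m)
          have r3 := rho_nonneg k
          have r4 : rho k ≤ rho m + rho (k - m) := by
            have := rho_add_le m (k - m); rwa [add_sub_cancel] at this
          have : rho k ^ s * rho (k - m) ≤ 2 ^ s * (rho m ^ (s + 1) + rho (k - m) ^ (s + 1)) := by
            calc rho k ^ s * rho (k - m) ≤ (rho m + rho (k - m)) ^ s * (rho m + rho (k - m)) := by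
                  gcongr; linarith
              _ = (rho m + rho (k - m)) ^ (s + 1) := by ring
              _ ≤ _ := by simpa using add_pow_le r1 r2 (s + 1)
          simp only [hh]
          calc _ = ‖c m‖ * ‖c (k - m)‖ * (rho k ^ s * rho (k - m)) := by ring
            _ ≤ ‖c m‖ * ‖c (k - m)‖ * (2 ^ s * (rho m ^ (s + 1) + rho (k - m) ^ (s + 1))) := by
                gcongr
            _ = _ := by ring
      _ = 2 ^ s * (D k + D k) := by
          rw [tsum_mul_left, (hD k).tsum_add (hD' k).summable, (hD' k).tsum_eq]
      _ = _ := by ring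
  -- Cauchy–Schwarz
  set Z := ∑' k : ℤ × ℤ, (rho k ^ 4)⁻¹ with hZ
  have hZ0 : 0 ≤ Z := tsum_nonneg fun k => by positivity
  obtain ⟨hGS, hGX⟩ := fub (G := fun y => rho y.2 ^ 4 * ‖c y.2‖ ^ 2 * h (y.1 - y.2) ^ 2)
    (X := fun x => (rho x.1 ^ 4 * ‖c x.1‖ ^ 2) * h x.2 ^ 2)
    (fun m n => by simp only [add_sub_cancel_left])
    (hs.mul_of_nonneg hS' (fun k => by positivity) (fun k => by positivity))
  have hin : ∀ k, Summable fun m => rho m ^ 4 * ‖c m‖ ^ 2 * h (k - m) ^ 2 :=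
    fun k => hGS.prod_factor k
  have hcs : ∀ k, D k ^ 2 ≤ Z * ∑' m, rho m ^ 4 * ‖c m‖ ^ 2 * h (k - m) ^ 2 := by
    intro k
    have e1 : ∀ m : ℤ × ℤ, ((rho m ^ 2)⁻¹) ^ 2 = (rho m ^ 4)⁻¹ := fun m => by
      rw [inv_pow]; congr 1; ring
    have e2 : ∀ m, (rho m ^ 2 * ‖c m‖ * h (k - m)) ^ 2 =
      rho m ^ 4 * ‖c m‖ ^ 2 * h (k - m) ^ 2 := fun m => by ring
    have := (cs (f := fun m : ℤ × ℤ => (rho m ^ 2)⁻¹)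
      (g := fun m => rho m ^ 2 * ‖c m‖ * h (k - m)) (by simpa only [e1] using sum_inv4)
      (by simpa only [e2] using hin k)).2
    simp only [e1, e2] at this
    refine le_trans (le_of_eq ?_) this
    congr 1
    refine tsum_congr fun m => ?_
    by_cases hm : m = 0
    · subst hm; simp [h0]
    · have := one_le_rho hm
      field_simp
  have hpt : ∀ k, rho k ^ (2 * s) * ‖bz c k‖ ^ 2 ≤
      (2 ^ (s + 1)) ^ 2 * Z * ∑' m, rho m ^ 4 * ‖c m‖ ^ 2 * h (k - m) ^ 2 := by
    intro k
    have q0 : 0 ≤ rho k ^ s * ‖bz c k‖ := mul_nonneg (pow_nonneg (rho_nonneg _) _) (norm_nonneg _)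
    calc rho k ^ (2 * s) * ‖bz c k‖ ^ 2 = (rho k ^ s * ‖bz c k‖) ^ 2 := by ring
      _ ≤ (2 ^ (s + 1) * D k) ^ 2 := pow_le_pow_left₀ q0 (hb k) 2
      _ = (2 ^ (s + 1)) ^ 2 * D k ^ 2 := by ring
      _ ≤ (2 ^ (s + 1)) ^ 2 * (Z * ∑' m, rho m ^ 4 * ‖c m‖ ^ 2 * h (k - m) ^ 2) := by
          have := hcs k; gcongr
      _ = _ := by ring
  have hsum := hGS.prod.mul_left ((2 ^ (s + 1)) ^ 2 * Z)
  have hfs : Summable fun k => rho k ^ (2 * s) * ‖bz c k‖ ^ 2 :=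
    Summable.of_nonneg_of_le (fun k => mul_nonneg (pow_nonneg (rho_nonneg _) _) (sq_nonneg _))
      hpt hsum
  refine ⟨hfs, (hfs.tsum_le_tsum hpt hsum).trans (le_of_eq ?_)⟩
  rw [tsum_mul_left, ← hGS.tsum_prod' hin, hGX]
  simp only [← eh]
  rw [mul_assoc, mul_assoc, mul_assoc]
  congr 2
  rw [hs.tsum_mul_tsum hS' (hs.mul_of_nonneg hS' (fun k => by positivity) (fun k => by positivity))]

end NS2D

namespace NS2D

instance : Countable Freq := inferInstanceAs (Countable {k : ℤ × ℤ // k ≠ 0})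

/-- wave number -/
def rr (k : Freq) : ℝ := rho k.1

lemma one_le_rr (k : Freq) : 1 ≤ rr k := one_le_rho k.2

lemma rr_pos (k : Freq) : 0 < rr k := lt_of_lt_of_le one_pos (one_le_rr k)

lemma lam_eq (k : Freq) : lam k = rr k ^ 2 := by
  rw [rr, rho_sq, lam, knormSq]

lemma lam_rpow (k : Freq) (n : ℕ) : lam k ^ (n : ℝ) = rr k ^ (2 * n) := by
  rw [Real.rpow_natCast, lam_eq, pow_mul]

/-- extension by zero to the full lattice -/
def ext (c : Coef) : ℤ × ℤ → ℂ := fun k => if h : k ≠ 0 then c ⟨k, h⟩ else 0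

lemma ext_zero (c : Coef) : ext c 0 = 0 := by simp [ext]

lemma ext_val (c : Coef) (k : Freq) : ext c k.1 = c k := by
  unfold ext; rw [dif_pos k.2]; rfl

lemma freq_inj : Function.Injective (fun k : Freq => k.1) := Subtype.val_injective

lemma freq_range : range (fun k : Freq => k.1) = {0}ᶜ := by
  ext k; constructor
  · rintro ⟨x, rfl⟩; exact x.2
  · intro h; exact ⟨⟨k, h⟩, rfl⟩

lemma freq_summable {E : Type*} [NormedAddCommGroup E] {F : ℤ × ℤ → E} (h0 : F 0 = 0) :
    (Summable fun k : Freq => F k.1) ↔ Summable F := by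
  refine freq_inj.summable_iff (f := F) ?_
  intro x hx
  rw [freq_range] at hx
  have : x = 0 := by simpa using hx
  rw [this, h0]

lemma freq_tsum {E : Type*} [NormedAddCommGroup E] {F : ℤ × ℤ → E} (h0 : F 0 = 0) :
    ∑' k : Freq, F k.1 = ∑' k, F k := by
  refine freq_inj.tsum_eq (f := F) ?_
  intro x hx
  rw [freq_range]
  intro h
  have : x = 0 := by simpa using h
  exact hx (by rw [this, h0])

lemma rho_eq (k : Freq) : rho k.1 = 2 * Real.pi * Real.sqrt (knormSq k) := by
  have h : rho k.1 = Real.sqrt (rho k.1 ^ 2) := (Real.sqrt_sq (rho_nonneg _)).symm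
  rw [h, rho_sq, show 4 * Real.pi ^ 2 * ((k.1.1 : ℝ) ^ 2 + (k.1.2 : ℝ) ^ 2) =
    (2 * Real.pi) ^ 2 * knormSq k by rw [knormSq]; ring,
    Real.sqrt_mul (by positivity), Real.sqrt_sq (by positivity)]

lemma sg_eq (m n k : Freq) (h : m.1 + n.1 = k.1) :
    sg m.1 n.1 = 2 * Real.pi * (dotR (evec m) (fvec n) * dotR (evec n) (evec k)) := by
  have p := Real.pi_pos
  have hs : ∀ x : Freq, Real.sqrt (knormSq x) ≠ 0 := by
    intro x hx
    have := one_le_rho x.2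
    rw [rho_eq, hx] at this; norm_num at this
  have a := hs m
  have b := hs n
  have c := hs k
  unfold sg
  rw [h, rho_eq m, rho_eq n, rho_eq k]
  simp only [dotR, evec, fvec, crs, dts, vc]
  simp
  field_simp
  ring

lemma Bc_eq (c : Coef) (k : Freq) : Bc c c k = bz (ext c) k.1 := by
  unfold Bc bz
  rw [← freq_tsum (F := fun m => ext c m * ext c (k.1 - m) * ((sg m (k.1 - m) : ℝ) : ℂ))
    (by simp [ext_zero]), mul_comm (((2 * Real.pi : ℝ) : ℂ)), mul_assoc, ← tsum_mul_left]
  congr 1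
  refine tsum_congr fun m => ?_
  by_cases h : k.1 - m.1 ≠ 0
  · rw [dif_pos h, ext_val]
    have e := sg_eq m ⟨k.1 - m.1, h⟩ k (by simp)
    have e2 : ext c (k.1 - m.1) = c ⟨k.1 - m.1, h⟩ := by unfold ext; rw [dif_pos h]
    simp only at e
    rw [e, e2]; push_cast; ring
  · rw [dif_neg h]
    have : k.1 - m.1 = 0 := by simpa using h
    rw [this, ext_zero]; simp

lemma ext_real {c : Coef} (h : IsReal c) (k : ℤ × ℤ) :
    ext c (-k) = -(starRingEnd ℂ) (ext c k) := by
  by_cases hk : k = 0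
  · subst hk; simp [ext_zero]
  · have h1 : ext c k = c ⟨k, hk⟩ := by unfold ext; rw [dif_pos hk]
    have h2 : ext c (-k) = c (fneg ⟨k, hk⟩) := by
      unfold ext fneg; rw [dif_pos (neg_ne_zero.mpr hk)]
    rw [h1, h2]; exact h _

/-- integer-order summability -/
abbrev Fin' (n : ℕ) (c : Coef) : Prop := Summable fun k => rr k ^ (2 * n) * ‖c k‖ ^ 2

/-- integer-order squared norm -/
abbrev S (n : ℕ) (c : Coef) : ℝ := ∑' k, rr k ^ (2 * n) * ‖c k‖ ^ 2

lemma finH_iff (n : ℕ) (c : Coef) : FinH n c ↔ Fin' n c := by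
  simp only [FinH, lam_rpow]

lemma hSq_eq (n : ℕ) (c : Coef) : hSq n c = S n c := by
  simp only [hSq, lam_rpow]

lemma ext_fin {n : ℕ} {c : Coef} (h : Fin' n c) :
    Summable fun k => rho k ^ (2 * n) * ‖ext c k‖ ^ 2 := by
  rw [← freq_summable (by simp [ext_zero])]
  simp only [ext_val]; exact h

lemma ext_S (n : ℕ) (c : Coef) : ∑' k, rho k ^ (2 * n) * ‖ext c k‖ ^ 2 = S n c := by
  rw [← freq_tsum (by simp [ext_zero])]
  simp only [ext_val]; rfl

lemma ext_fin2 {c : Coef} (h : Fin' 2 c) : Summable fun k => rho k ^ 4 * ‖ext c k‖ ^ 2 := by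
  have := ext_fin h
  simpa only [Nat.reduceMul] using this

lemma ext_S1 (c : Coef) : ∑' k, rho k ^ 2 * ‖ext c k‖ ^ 2 = S 1 c := by
  have := ext_S 1 c
  simpa only [Nat.reduceMul] using this

lemma ext_S2 (c : Coef) : ∑' k, rho k ^ 4 * ‖ext c k‖ ^ 2 = S 2 c := by
  have := ext_S 2 c
  simpa only [Nat.reduceMul] using this

lemma S_nonneg (n : ℕ) (c : Coef) : 0 ≤ S n c :=
  tsum_nonneg fun k => by have := rr_pos k; positivity

lemma Fin_mono {n m : ℕ} (h : n ≤ m) {c : Coef} (hc : Fin' m c) : Fin' n c :=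
  Summable.of_nonneg_of_le (fun k => by have := rr_pos k; positivity)
    (fun k => mul_le_mul_of_nonneg_right
      (pow_le_pow_right₀ (one_le_rr k) (by omega)) (sq_nonneg _)) hc

lemma S_mono {n m : ℕ} (h : n ≤ m) {c : Coef} (hc : Fin' m c) : S n c ≤ S m c :=
  Summable.tsum_le_tsum (fun k => mul_le_mul_of_nonneg_right
      (pow_le_pow_right₀ (one_le_rr k) (by omega)) (sq_nonneg _)) (Fin_mono h hc) hc

lemma F1 {c : Coef} (hs : Fin' 2 c) :
    Summable (fun k => rr k ^ 2 * (‖c k‖ * ‖Bc c c k‖)) ∧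
    ∑' k, rr k ^ 2 * (‖c k‖ * ‖Bc c c k‖) ≤ 50 * (1 + S 1 c) * S 2 c := by
  obtain ⟨a, b⟩ := K1 (ext_zero c) (ext_fin2 hs)
  rw [ext_S1, ext_S2] at b
  rw [← freq_summable (by simp [ext_zero])] at a
  rw [← freq_tsum (by simp [ext_zero])] at b
  simp only [ext_val, ← Bc_eq] at a b
  exact ⟨a, b⟩

lemma w1 (b : ℕ) {N p q d : ℝ} (hN : 0 ≤ N) (hp : 0 ≤ p) (hq : 0 ≤ q) (hd : |p - q| ≤ d) :
    |min p N ^ b - min q N ^ b| * min q p ≤ b * d * (min q N ^ b + min p N ^ b) := by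
  wlog h : p ≤ q generalizing p q with H
  · have := H hq hp (by rwa [abs_sub_comm]) (le_of_not_ge h)
    rw [abs_sub_comm, min_comm q p, add_comm (min q N ^ b)]; exact this
  have hd0 : 0 ≤ d := (abs_nonneg _).trans hd
  have x0 : 0 ≤ min p N := le_min hp hN
  have y0 : 0 ≤ min q N := le_min hq hN
  rcases le_total N p with hNp | hNp
  · rw [min_eq_right hNp, min_eq_right (hNp.trans h)]
    simp only [sub_self, abs_zero, zero_mul]; positivity
  rw [min_eq_left hNp, min_eq_right h]
  rcases Nat.eq_zero_or_pos b with hb | hb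
  · subst hb; simp
  have hpm : p ≤ min q N := le_min h hNp
  have i1 := abs_pow_sub_pow_le p (min q N) b
  rw [abs_of_nonneg hp, abs_of_nonneg y0, max_eq_right hpm] at i1
  have i2 : |p - min q N| ≤ d := by
    refine le_trans ?_ hd
    rw [abs_sub_comm, abs_sub_comm p q, abs_of_nonneg (by linarith), abs_of_nonneg (by linarith)]
    have := min_le_left q N; linarith
  calc |p ^ b - min q N ^ b| * p ≤ (d * b * min q N ^ (b - 1)) * min q N := by
        refine mul_le_mul (i1.trans ?_) hpm hp (by positivity)
        gcongr
    _ = b * d * (min q N ^ b) := by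
        conv_rhs => rw [← Nat.sub_add_cancel hb, pow_succ]
        simp only [Nat.sub_add_cancel hb]
        ring
    _ ≤ _ := by
        have : 0 ≤ p ^ b := by positivity
        have h3 : (0 : ℝ) ≤ b * d := by positivity
        nlinarith [mul_nonneg h3 this]

lemma w2 (b : ℕ) {N p q r : ℝ} (hN : 0 ≤ N) (hp : 0 ≤ p) (hq : 0 ≤ q) (hr : 0 ≤ r)
    (h : p ≤ q + r) : min p N ^ b ≤ 2 ^ b * (min q N ^ b + min r N ^ b) := by
  have x0 : 0 ≤ min p N := le_min hp hN
  have y0 : 0 ≤ min q N := le_min hq hN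
  have z0 : 0 ≤ min r N := le_min hr hN
  have h1 : min p N ≤ min q N + min r N := by
    rcases le_total q N with a | a
    · rcases le_total r N with c | c
      · rw [min_eq_left a, min_eq_left c]; exact (min_le_left _ _).trans h
      · rw [min_eq_right c]; have := min_le_right p N; linarith
    · rw [min_eq_right a]; have := min_le_right p N; linarith
  calc min p N ^ b ≤ (min q N + min r N) ^ b := pow_le_pow_left₀ x0 h1 b
    _ ≤ 2 ^ (b - 1) * (min q N ^ b + min r N ^ b) := add_pow_le y0 z0 b
    _ ≤ _ := by
      gcongr
      · norm_num
      · omega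

lemma F2 (b : ℕ) {N : ℝ} (hN : 0 ≤ N) {c : Coef} (hs : Fin' 2 c) (hc : IsReal c)
    {ε : ℝ} (hε : 0 < ε) :
    |∑' k, rr k ^ 2 * (min (rr k) N ^ b) ^ 2 * (Bc c c k * (starRingEnd ℂ) (c k)).re| ≤
      b * (2 ^ b + 1) * (6 * ε⁻¹ * S 1 c *
          (∑' k, rr k ^ 2 * (min (rr k) N ^ b) ^ 2 * ‖c k‖ ^ 2) +
        150 * ε * ∑' k, rr k ^ 4 * (min (rr k) N ^ b) ^ 2 * ‖c k‖ ^ 2) := by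
  have m0 : ∀ k, 0 ≤ min (rho k) N := fun k => le_min (rho_nonneg _) hN
  have := K2 (ext_zero c) (ext_fin2 hs) (ext_real hc) (ω := fun k => min (rho k) N ^ b)
    (Ω := N ^ b) (c1 := b) (c2 := 2 ^ b) (fun k => pow_nonneg (m0 k) _)
    (fun k => pow_le_pow_left₀ (m0 k) (min_le_right _ _) _) (by positivity) (by positivity)
    (fun m n => w1 b hN (rho_nonneg _) (rho_nonneg _) (by
      rw [abs_le]
      have := rho_add_le m n
      have := rho_le_add1 m n
      constructor <;> linarith))
    (fun m n => w2 b hN (rho_nonneg _) (rho_nonneg _) (rho_nonneg _) (rho_add_le m n))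
    (fun m n => w2 b hN (rho_nonneg _) (rho_nonneg _) (rho_nonneg _) (rho_le_add1 m n)) hε
  rw [ext_S1] at this
  rw [← freq_tsum (by simp [ext_zero]), ← freq_tsum (by simp [ext_zero]),
    ← freq_tsum (by simp [ext_zero])] at this
  simp only [ext_val, ← Bc_eq] at this
  exact this

lemma F3 (s : ℕ) : ∃ C : ℝ, 0 ≤ C ∧ ∀ c : Coef, Fin' 2 c → Fin' (s + 1) c →
    Fin' s (Bc c c) ∧ S s (Bc c c) ≤ C * S 2 c * S (s + 1) c := by
  obtain ⟨C, hC, h⟩ := K3 s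
  refine ⟨C, hC, fun c h2 hs => ?_⟩
  obtain ⟨a, b⟩ := h (ext c) (ext_zero c) (ext_fin2 h2) (ext_fin hs)
  rw [ext_S2, ext_S] at b
  have a' : Fin' s (Bc c c) := by
    have := a.comp_injective freq_inj
    simp only [Function.comp_def, ← Bc_eq] at this
    exact this
  refine ⟨a', le_trans ?_ b⟩
  refine Summable.tsum_le_tsum_of_inj (fun k : Freq => k.1) freq_inj
    (fun k _ => mul_nonneg (pow_nonneg (rho_nonneg _) _) (sq_nonneg _)) (fun k => ?_) a' a
  rw [Bc_eq]; exact le_rfl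

end NS2D

namespace NS2D

lemma tsum_aesm {μ : Measure ℝ} {F : Freq → ℝ → ℝ} (hF : ∀ k, AEStronglyMeasurable (F k) μ)
    (hs : ∀ᵐ t ∂μ, Summable fun k => F k t) :
    AEStronglyMeasurable (fun t => ∑' k, F k t) μ := by
  refine aestronglyMeasurable_of_tendsto_ae (Filter.atTop : Filter (Finset Freq))
    (f := fun (s : Finset Freq) t => ∑ k ∈ s, F k t) (fun s => ?_) ?_
  · exact Finset.aestronglyMeasurable_fun_sum s (fun k _ => hF k)
  · filter_upwards [hs] with t ht
    exact ht.hasSum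

/-- dominated exchange of sum and integral -/
lemma H1 {μ : Measure ℝ} {F : Freq → ℝ → ℝ} {G : ℝ → ℝ}
    (hF : ∀ k, AEStronglyMeasurable (F k) μ)
    (hs : ∀ᵐ t ∂μ, (Summable fun k => |F k t|) ∧ ∑' k, |F k t| ≤ G t) (hG : Integrable G μ) :
    (∀ k, Integrable (F k) μ) ∧ Integrable (fun t => ∑' k, F k t) μ ∧
      HasSum (fun k => ∫ t, F k t ∂μ) (∫ t, ∑' k, F k t ∂μ) := by
  have hn : Integrable (fun t => ∑' k, |F k t|) μ := by
    refine hG.mono' (tsum_aesm (fun k => (hF k).norm) (hs.mono fun t h => h.1)) ?_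
    filter_upwards [hs] with t ht
    rw [Real.norm_eq_abs, abs_of_nonneg (tsum_nonneg fun k => abs_nonneg _)]
    exact ht.2
  refine ⟨fun k => ?_, ?_, ?_⟩
  · refine hn.mono' (hF k) ?_
    filter_upwards [hs] with t ht
    exact ht.1.le_tsum k (fun j _ => abs_nonneg _)
  · refine hn.mono' (tsum_aesm hF (hs.mono fun t h => h.1.of_abs)) ?_
    filter_upwards [hs] with t ht
    exact norm_tsum_le_tsum_norm ht.1
  · refine hasSum_integral_of_dominated_convergence (fun k t => |F k t|) hF
      (fun k => Filter.Eventually.of_forall fun t => le_rfl) (hs.mono fun t h => h.1) hn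
      (hs.mono fun t h => h.1.of_abs.hasSum)

/-- monotone exchange of sum and integral -/
lemma H2 {μ : Measure ℝ} {F : Freq → ℝ → ℝ} {K : ℝ}
    (hF : ∀ k, Integrable (F k) μ) (h0 : ∀ k t, 0 ≤ F k t)
    (hK : ∀ s : Finset Freq, ∑ k ∈ s, ∫ t, F k t ∂μ ≤ K) :
    (∀ᵐ t ∂μ, Summable fun k => F k t) ∧ Integrable (fun t => ∑' k, F k t) μ ∧
      ∫ t, ∑' k, F k t ∂μ ≤ K := by
  have hI0 : ∀ k, 0 ≤ ∫ t, F k t ∂μ := fun k => integral_nonneg (h0 k)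
  have hsum : Summable fun k => ∫ t, F k t ∂μ := summable_of_sum_le hI0 hK
  have hle : ∑' k, ∫ t, F k t ∂μ ≤ K := hsum.tsum_le_of_sum_le hK
  have hl : ∫⁻ t, ∑' k, ENNReal.ofReal (F k t) ∂μ = ENNReal.ofReal (∑' k, ∫ t, F k t ∂μ) := by
    rw [lintegral_tsum (fun k => (hF k).aemeasurable.ennreal_ofReal),
      ENNReal.ofReal_tsum_of_nonneg hI0 hsum]
    refine tsum_congr fun k => ?_
    rw [ofReal_integral_eq_lintegral_ofReal (hF k) (Filter.Eventually.of_forall (h0 k))]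
  have hae : ∀ᵐ t ∂μ, Summable fun k => F k t := by
    have := ae_lt_top' (f := fun t => ∑' k, ENNReal.ofReal (F k t))
      (AEMeasurable.ennreal_tsum fun k => (hF k).aemeasurable.ennreal_ofReal)
      (by rw [hl]; exact ENNReal.ofReal_ne_top)
    filter_upwards [this] with t ht
    have h1 := ENNReal.summable_toReal ht.ne
    simpa only [ENNReal.toReal_ofReal (h0 _ t)] using h1
  have hm := tsum_aesm (fun k => (hF k).aestronglyMeasurable) hae
  have hnn : 0 ≤ᵐ[μ] fun t => ∑' k, F k t :=
    Filter.Eventually.of_forall fun t => tsum_nonneg fun k => h0 k t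
  have hl' : ∫⁻ t, ENNReal.ofReal (∑' k, F k t) ∂μ = ENNReal.ofReal (∑' k, ∫ t, F k t ∂μ) := by
    rw [← hl]
    refine lintegral_congr_ae ?_
    filter_upwards [hae] with t ht
    exact ENNReal.ofReal_tsum_of_nonneg (fun k => h0 k t) ht
  refine ⟨hae, ⟨hm, ?_⟩, ?_⟩
  · rw [hasFiniteIntegral_iff_ofReal hnn, hl']; exact ENNReal.ofReal_lt_top
  · rw [integral_eq_lintegral_of_nonneg_ae hnn hm, hl', ENNReal.toReal_ofReal (tsum_nonneg hI0)]
    exact hle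

lemma sq_sub_le (x y : ℂ) : ‖x - y‖ ^ 2 ≤ 2 * (‖x‖ ^ 2 + ‖y‖ ^ 2) := by
  have := norm_sub_le x y
  have h2 : ‖x - y‖ ^ 2 ≤ (‖x‖ + ‖y‖) ^ 2 := pow_le_pow_left₀ (norm_nonneg _) this 2
  nlinarith [sq_nonneg (‖x‖ - ‖y‖)]

lemma Fin_sub {n : ℕ} {c d : Coef} (hc : Fin' n c) (hd : Fin' n d) : Fin' n (c - d) := by
  refine Summable.of_nonneg_of_le (fun k => by have := rr_pos k; positivity) (fun k => ?_)
    ((hc.add hd).mul_left 2)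
  have := sq_sub_le (c k) (d k)
  have hp : 0 ≤ rr k ^ (2 * n) := pow_nonneg (rr_pos k).le _
  simp only [Pi.sub_apply]
  nlinarith [mul_le_mul_of_nonneg_left this hp]

lemma mode_le {n : ℕ} {c : Coef} (hc : Fin' n c) (k : Freq) : ‖c k‖ ^ 2 ≤ S n c := by
  refine le_trans ?_ (hc.le_tsum k (fun j _ => by have := rr_pos j; positivity))
  have : 1 ≤ rr k ^ (2 * n) := one_le_pow₀ (one_le_rr k)
  nlinarith [sq_nonneg ‖c k‖]

section sol
variable {T ν : ℝ} {f θ : Coef} {u : ℝ → Coef}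

lemma fin2 (h : IsNSSol ν f T θ u) {t : ℝ} (ht : t ∈ Ioc 0 T) : Fin' 2 (u t) := by
  have := (h.memL2H2.1 t ht).2
  rw [← finH_iff]; exact_mod_cast this

lemma fin1 (h : IsNSSol ν f T θ u) (hθ : Fin' 1 θ) {t : ℝ} (ht : t ∈ Icc 0 T) :
    Fin' 1 (u t) := by
  rcases ht.1.eq_or_lt with h0 | h0
  · rw [← h0, h.init]; exact hθ
  · exact Fin_mono (by norm_num) (fin2 h ⟨h0, ht.2⟩)

lemma int2 (h : IsNSSol ν f T θ u) : IntegrableOn (fun t => S 2 (u t)) (Ioc 0 T) := by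
  have := h.memL2H2.2
  simp only [← hSq_eq]; exact_mod_cast this

lemma hN_eq (n : ℕ) (c : Coef) : hN n c = Real.sqrt (S n c) := by rw [hN, hSq_eq]

lemma contS (h : IsNSSol ν f T θ u) {t : ℝ} (ht : t ∈ Icc 0 T) {ε : ℝ} (hε : 0 < ε) :
    ∃ δ > 0, ∀ s ∈ Icc (0:ℝ) T, |s - t| < δ → S 1 (u s - u t) < ε ^ 2 := by
  obtain ⟨δ, hδ, H⟩ := h.contH1 t ht ε hε
  refine ⟨δ, hδ, fun s hs hst => ?_⟩
  have := H s hs hst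
  have e : hN 1 (u s - u t) = Real.sqrt (S 1 (u s - u t)) := by
    have := hN_eq 1 (u s - u t); exact_mod_cast this
  rw [e, Real.sqrt_lt' hε] at this
  exact this

lemma sup1 (h : IsNSSol ν f T θ u) (hθ : Fin' 1 θ) :
    ∃ M, 0 ≤ M ∧ ∀ t ∈ Icc 0 T, S 1 (u t) ≤ M := by
  refine isCompact_Icc.induction_on (p := fun s => ∃ M, 0 ≤ M ∧ ∀ t ∈ s, t ∈ Icc 0 T → S 1 (u t) ≤ M)
    ?_ ?_ ?_ ?_ |>.imp fun M hM => ⟨hM.1, fun t ht => hM.2 t ht ht⟩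
  · exact ⟨0, le_rfl, by simp⟩
  · rintro s t hst ⟨M, h0, hM⟩; exact ⟨M, h0, fun x hx => hM x (hst hx)⟩
  · rintro s t ⟨M, h0, hM⟩ ⟨M', h0', hM'⟩
    refine ⟨max M M', le_max_of_le_left h0, fun x hx hx' => ?_⟩
    rcases hx with hx | hx
    · exact (hM x hx hx').trans (le_max_left _ _)
    · exact (hM' x hx hx').trans (le_max_right _ _)
  · intro t ht
    obtain ⟨δ, hδ, H⟩ := contS h ht one_pos
    refine ⟨Metric.ball t δ, mem_nhdsWithin_of_mem_nhds (Metric.ball_mem_nhds t hδ),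
      2 * (S 1 (u t) + 1), by have := S_nonneg 1 (u t); positivity, fun s hs hs' => ?_⟩
    have h1 := H s hs' (by rwa [Metric.mem_ball, Real.dist_eq] at hs)
    have f1 := fin1 h hθ ht
    have f2 := Fin_sub (fin1 h hθ hs') f1
    have : S 1 (u s) ≤ 2 * (S 1 (u t) + S 1 (u s - u t)) := by
      rw [S, S, S, ← f1.tsum_add f2, ← tsum_mul_left]
      refine (fin1 h hθ hs').tsum_le_tsum (fun k => ?_) ((f1.add f2).mul_left 2)
      have := sq_sub_le (u s k - u t k) (- u t k)
      rw [sub_neg_eq_add, sub_add_cancel, norm_neg] at this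
      have hp : 0 ≤ rr k ^ (2 * 1) := pow_nonneg (rr_pos k).le _
      simp only [Pi.sub_apply]
      nlinarith [mul_le_mul_of_nonneg_left this hp]
    linarith

lemma modeCont (h : IsNSSol ν f T θ u) (hθ : Fin' 1 θ) (k : Freq) :
    ContinuousOn (fun t => u t k) (Icc 0 T) := by
  rw [Metric.continuousOn_iff]
  intro t ht ε hε
  obtain ⟨δ, hδ, H⟩ := contS h ht hε
  refine ⟨δ, hδ, fun s hs hst => ?_⟩
  have h1 := H s hs (by rwa [Real.dist_eq] at hst)
  have h2 := mode_le (Fin_sub (fin1 h hθ hs) (fin1 h hθ ht)) k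
  rw [Pi.sub_apply] at h2
  rw [dist_eq_norm]
  exact lt_of_pow_lt_pow_left₀ 2 hε.le (lt_of_le_of_lt h2 h1)

lemma modeMeas (h : IsNSSol ν f T θ u) (hθ : Fin' 1 θ) (k : Freq) :
    AEStronglyMeasurable (fun t => u t k) (volume.restrict (Ioc 0 T)) :=
  ((modeCont h hθ k).mono Ioc_subset_Icc_self).aestronglyMeasurable measurableSet_Ioc

lemma BMeas (h : IsNSSol ν f T θ u) (hθ : Fin' 1 θ) (k : Freq) :
    AEStronglyMeasurable (fun t => Bc (u t) (u t) k) (volume.restrict (Ioc 0 T)) := by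
  have m1 : AEStronglyMeasurable (deriv fun t => u t k) (volume.restrict (Ioc 0 T)) :=
    (measurable_deriv _).aestronglyMeasurable
  have m2 := ((aestronglyMeasurable_const (b := f k) (μ := volume.restrict (Ioc 0 T))).sub
    ((modeMeas h hθ k).const_mul ((ν * lam k : ℝ) : ℂ))).sub m1
  refine m2.congr ?_
  filter_upwards [ae_restrict_mem measurableSet_Ioc] with t ht
  simp only [Pi.sub_apply]
  rw [(h.deriv k t ht).deriv]; ring

end sol

end NS2D

namespace NS2D

/-- derivative of the squared mode -/
def gg (ν : ℝ) (f c : Coef) (k : Freq) : ℝ :=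
  2 * ((starRingEnd ℂ) (c k) * (f k - ((ν * lam k : ℝ) : ℂ) * c k - Bc c c k)).re

lemma gg_eq (ν : ℝ) (f c : Coef) (k : Freq) :
    gg ν f c k = 2 * (f k * (starRingEnd ℂ) (c k)).re - 2 * ν * rr k ^ 2 * ‖c k‖ ^ 2 -
      2 * (Bc c c k * (starRingEnd ℂ) (c k)).re := by
  rw [gg, ← lam_eq, ← Complex.normSq_eq_norm_sq, Complex.normSq_apply]
  simp
  ring

lemma re_le (x y : ℂ) : |(x * (starRingEnd ℂ) y).re| ≤ ‖x‖ * ‖y‖ := by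
  refine (Complex.abs_re_le_norm _).trans ?_
  simp

lemma gg_abs {ν : ℝ} (hν : 0 < ν) {f c : Coef} (hf : Fin' 0 f) (hs : Fin' 2 c) :
    (Summable fun k => rr k ^ 2 * |gg ν f c k|) ∧
    ∑' k, rr k ^ 2 * |gg ν f c k| ≤
      S 0 f + (1 + 2 * ν) * S 2 c + 100 * (1 + S 1 c) * S 2 c := by
  obtain ⟨b1, b2⟩ := F1 hs
  have hsum := (hf.add (hs.mul_left (1 + 2 * ν))).add (b1.mul_left 2)
  have hpt : ∀ k, rr k ^ 2 * |gg ν f c k| ≤ rr k ^ (2 * 0) * ‖f k‖ ^ 2 +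
      (1 + 2 * ν) * (rr k ^ (2 * 2) * ‖c k‖ ^ 2) + 2 * (rr k ^ 2 * (‖c k‖ * ‖Bc c c k‖)) := by
    intro k
    have r0 := rr_pos k
    rw [gg_eq]
    have i1 := re_le (f k) (c k)
    have i2 := re_le (Bc c c k) (c k)
    have i3 : |2 * (f k * (starRingEnd ℂ) (c k)).re - 2 * ν * rr k ^ 2 * ‖c k‖ ^ 2 -
      2 * (Bc c c k * (starRingEnd ℂ) (c k)).re| ≤ 2 * (‖f k‖ * ‖c k‖) +
        2 * ν * rr k ^ 2 * ‖c k‖ ^ 2 + 2 * (‖Bc c c k‖ * ‖c k‖) := by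
      have p : 0 ≤ 2 * ν * rr k ^ 2 * ‖c k‖ ^ 2 := by positivity
      rw [abs_le] at i1 i2 ⊢
      constructor <;> linarith [i1.1, i1.2, i2.1, i2.2]
    have i4 := mul_le_mul_of_nonneg_left i3 (sq_nonneg (rr k))
    refine i4.trans ?_
    have i5 : 2 * (rr k ^ 2 * (‖f k‖ * ‖c k‖)) ≤ ‖f k‖ ^ 2 + rr k ^ 4 * ‖c k‖ ^ 2 := by
      nlinarith [sq_nonneg (‖f k‖ - rr k ^ 2 * ‖c k‖)]
    have e : rr k ^ (2 * 2) = rr k ^ 4 := by norm_num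
    rw [e]
    simp only [mul_zero, pow_zero, one_mul]
    nlinarith [i5]
  have hs' : Summable fun k => rr k ^ 2 * |gg ν f c k| :=
    Summable.of_nonneg_of_le (fun k => by positivity) hpt hsum
  refine ⟨hs', (hs'.tsum_le_tsum hpt hsum).trans ?_⟩
  rw [(hf.add (hs.mul_left (1 + 2 * ν))).tsum_add (b1.mul_left 2),
    hf.tsum_add (hs.mul_left (1 + 2 * ν)), tsum_mul_left, tsum_mul_left]
  have : (∑' k, rr k ^ (2 * 0) * ‖f k‖ ^ 2) = S 0 f := rfl
  have e2 : (∑' k, rr k ^ (2 * 2) * ‖c k‖ ^ 2) = S 2 c := rfl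
  rw [this, e2]
  linarith

/-- parameter -/
def ee (ν : ℝ) (b : ℕ) : ℝ := ν / (600 * (b + 1) * (2 ^ b + 1))

/-- constant in the energy inequality -/
def Kb (ν : ℝ) (b : ℕ) : ℝ := 12 * b * (2 ^ b + 1) * (ee ν b)⁻¹

lemma ee_pos {ν : ℝ} (hν : 0 < ν) (b : ℕ) : 0 < ee ν b := by unfold ee; positivity

lemma Kb_nonneg {ν : ℝ} (hν : 0 < ν) (b : ℕ) : 0 ≤ Kb ν b := by
  have := ee_pos hν b
  unfold Kb; positivity

lemma ee_le {ν : ℝ} (hν : 0 < ν) (b : ℕ) : 2 * (b * (2 ^ b + 1)) * (150 * ee ν b) ≤ ν / 2 := by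
  unfold ee
  have h : (0 : ℝ) < 600 * (b + 1) * (2 ^ b + 1) := by positivity
  have e : 2 * ((b : ℝ) * (2 ^ b + 1)) * (150 * (ν / (600 * (b + 1) * (2 ^ b + 1)))) =
      (300 * (b * (2 ^ b + 1)) * ν) / (600 * (b + 1) * (2 ^ b + 1)) := by ring
  rw [e, div_le_iff₀ h]
  have : (0 : ℝ) < 2 ^ b + 1 := by positivity
  nlinarith [mul_pos this hν]

lemma Pt {ν : ℝ} (hν : 0 < ν) (b : ℕ) {f c : Coef} (hf : Fin' b f) (hs : Fin' 2 c)
    (hb : Fin' (b + 1) c) (hc : IsReal c) {N : ℝ} (hN : 0 ≤ N) (F : Finset Freq)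
    (hF : ∀ k ∈ F, rr k ≤ N) :
    ∑' k, rr k ^ 2 * (min (rr k) N ^ b) ^ 2 * gg ν f c k ≤
      -ν * ∑ k ∈ F, rr k ^ (2 * (b + 2)) * ‖c k‖ ^ 2 + 2 / ν * S b f +
        Kb ν b * S 1 c * S (b + 1) c := by
  have m0 : ∀ k, 0 ≤ min (rr k) N := fun k => le_min (rr_pos k).le hN
  have mN : ∀ k, (min (rr k) N ^ b) ^ 2 ≤ (N ^ b) ^ 2 := fun k =>
    pow_le_pow_left₀ (pow_nonneg (m0 k) _) (pow_le_pow_left₀ (m0 k) (min_le_right _ _) _) 2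
  have mr : ∀ k, (min (rr k) N ^ b) ^ 2 ≤ (rr k ^ b) ^ 2 := fun k =>
    pow_le_pow_left₀ (pow_nonneg (m0 k) _) (pow_le_pow_left₀ (m0 k) (min_le_left _ _) _) 2
  have hg := (gg_abs hν (Fin_mono (Nat.zero_le b) hf) hs).1
  have hgS : Summable fun k => rr k ^ 2 * (min (rr k) N ^ b) ^ 2 * gg ν f c k := by
    refine Summable.of_norm_bounded (hg.mul_left ((N ^ b) ^ 2)) (fun k => ?_)
    rw [Real.norm_eq_abs, abs_mul, abs_mul, abs_of_nonneg (sq_nonneg _),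
      abs_of_nonneg (sq_nonneg _)]
    have := mN k
    calc _ ≤ rr k ^ 2 * (N ^ b) ^ 2 * |gg ν f c k| := by gcongr
      _ = _ := by ring
  have hBS : Summable fun k => rr k ^ 2 * (min (rr k) N ^ b) ^ 2 *
      (Bc c c k * (starRingEnd ℂ) (c k)).re := by
    refine Summable.of_norm_bounded ((F1 hs).1.mul_left ((N ^ b) ^ 2)) (fun k => ?_)
    rw [Real.norm_eq_abs, abs_mul, abs_mul, abs_of_nonneg (sq_nonneg (rr k)),
      abs_of_nonneg (sq_nonneg (min (rr k) N ^ b))]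
    have := mN k
    have := re_le (Bc c c k) (c k)
    calc _ ≤ rr k ^ 2 * (N ^ b) ^ 2 * (‖Bc c c k‖ * ‖c k‖) := by gcongr
      _ = _ := by ring
  have hDS : Summable fun k => rr k ^ 4 * (min (rr k) N ^ b) ^ 2 * ‖c k‖ ^ 2 := by
    refine Summable.of_nonneg_of_le (fun k => by have := rr_pos k; positivity) (fun k => ?_)
      (hs.mul_left ((N ^ b) ^ 2))
    have := mN k
    have e : rr k ^ (2 * 2) = rr k ^ 4 := by norm_num
    rw [e]
    calc _ ≤ rr k ^ 4 * (N ^ b) ^ 2 * ‖c k‖ ^ 2 := by gcongr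
      _ = _ := by ring
  have hE : ∀ k, rr k ^ 2 * (min (rr k) N ^ b) ^ 2 * ‖c k‖ ^ 2 ≤
      rr k ^ (2 * (b + 1)) * ‖c k‖ ^ 2 := by
    intro k
    have := mr k
    calc _ ≤ rr k ^ 2 * (rr k ^ b) ^ 2 * ‖c k‖ ^ 2 := by gcongr
      _ = _ := by ring
  have hES : Summable fun k => rr k ^ 2 * (min (rr k) N ^ b) ^ 2 * ‖c k‖ ^ 2 :=
    Summable.of_nonneg_of_le (fun k => by positivity) hE hb
  have hpt : ∀ k, rr k ^ 2 * (min (rr k) N ^ b) ^ 2 * gg ν f c k ≤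
      (-(3 / 2 * ν)) * (rr k ^ 4 * (min (rr k) N ^ b) ^ 2 * ‖c k‖ ^ 2) +
      2 / ν * (rr k ^ (2 * b) * ‖f k‖ ^ 2) +
      (-2) * (rr k ^ 2 * (min (rr k) N ^ b) ^ 2 * (Bc c c k * (starRingEnd ℂ) (c k)).re) := by
    intro k
    rw [gg_eq]
    have i1 := (abs_le.mp (re_le (f k) (c k))).2
    have i2 := mr k
    have i3 : 2 * (rr k ^ 2 * (min (rr k) N ^ b) ^ 2 * (f k * (starRingEnd ℂ) (c k)).re) ≤
        ν / 2 * (rr k ^ 4 * (min (rr k) N ^ b) ^ 2 * ‖c k‖ ^ 2) +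
          2 / ν * (rr k ^ (2 * b) * ‖f k‖ ^ 2) := by
      have e : rr k ^ (2 * b) = (rr k ^ b) ^ 2 := by ring
      rw [e]
      generalize min (rr k) N ^ b = w at *
      have j1 : 2 * (rr k ^ 2 * w ^ 2 * (f k * (starRingEnd ℂ) (c k)).re) ≤
          2 * (rr k ^ 2 * w ^ 2 * (‖f k‖ * ‖c k‖)) := by gcongr
      have j2 : 2 / ν * (w ^ 2 * ‖f k‖ ^ 2) ≤ 2 / ν * ((rr k ^ b) ^ 2 * ‖f k‖ ^ 2) := by gcongr
      have j3 : ν / 2 * (rr k ^ 4 * w ^ 2 * ‖c k‖ ^ 2) + 2 / ν * (w ^ 2 * ‖f k‖ ^ 2) -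
          2 * (rr k ^ 2 * w ^ 2 * (‖f k‖ * ‖c k‖)) =
          2 / ν * w ^ 2 * (‖f k‖ - ν / 2 * (rr k ^ 2 * ‖c k‖)) ^ 2 := by field_simp; ring
      have j4 : 0 ≤ 2 / ν * w ^ 2 * (‖f k‖ - ν / 2 * (rr k ^ 2 * ‖c k‖)) ^ 2 := by positivity
      linarith
    linear_combination i3
  have hR := (((hDS.mul_left (-(3 / 2 * ν))).add (hf.mul_left (2 / ν))).add (hBS.mul_left (-2)))
  refine (hgS.tsum_le_tsum hpt hR).trans ?_
  rw [((hDS.mul_left (-(3 / 2 * ν))).add (hf.mul_left (2 / ν))).tsum_add (hBS.mul_left (-2)),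
    (hDS.mul_left (-(3 / 2 * ν))).tsum_add (hf.mul_left (2 / ν)), tsum_mul_left, tsum_mul_left,
    tsum_mul_left]
  have e1 : (∑' k, rr k ^ (2 * b) * ‖f k‖ ^ 2) = S b f := rfl
  rw [e1]
  have k2 := F2 b hN hs hc (ee_pos hν b)
  have hE' : ∑' k, rr k ^ 2 * (min (rr k) N ^ b) ^ 2 * ‖c k‖ ^ 2 ≤ S (b + 1) c :=
    hES.tsum_le_tsum hE hb
  have hD' : ∑ k ∈ F, rr k ^ (2 * (b + 2)) * ‖c k‖ ^ 2 ≤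
      ∑' k, rr k ^ 4 * (min (rr k) N ^ b) ^ 2 * ‖c k‖ ^ 2 := by
    refine le_trans (le_of_eq ?_)
      (hDS.sum_le_tsum F (fun k _ => by have := rr_pos k; positivity))
    refine Finset.sum_congr rfl fun k hk => ?_
    rw [min_eq_left (hF k hk)]; ring
  have hD0 : 0 ≤ ∑' k, rr k ^ 4 * (min (rr k) N ^ b) ^ 2 * ‖c k‖ ^ 2 :=
    tsum_nonneg fun k => by have := rr_pos k; positivity
  have k3 := (abs_le.mp k2).1
  generalize ∑' k, rr k ^ 4 * (min (rr k) N ^ b) ^ 2 * ‖c k‖ ^ 2 = D at *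
  generalize ∑' k, rr k ^ 2 * (min (rr k) N ^ b) ^ 2 * ‖c k‖ ^ 2 = E at *
  generalize ∑' k, rr k ^ 2 * (min (rr k) N ^ b) ^ 2 * (Bc c c k * (starRingEnd ℂ) (c k)).re = X
    at *
  have k4 : Kb ν b * S 1 c * E ≤ Kb ν b * S 1 c * S (b + 1) c :=
    mul_le_mul_of_nonneg_left hE' (mul_nonneg (Kb_nonneg hν b) (S_nonneg 1 c))
  have k5 := mul_le_mul_of_nonneg_right (ee_le hν b) hD0
  have k6 : -2 * X ≤ Kb ν b * S 1 c * E + (2 * (b * (2 ^ b + 1)) * (150 * ee ν b)) * D := by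
    unfold Kb
    linarith
  have k7 := mul_le_mul_of_nonneg_left hD' hν.le
  linarith

section sol
variable {T ν : ℝ} {f θ : Coef} {u : ℝ → Coef}

lemma ggMeas (h : IsNSSol ν f T θ u) (hθ : Fin' 1 θ) (k : Freq) :
    AEStronglyMeasurable (fun t => gg ν f (u t) k) (volume.restrict (Ioc 0 T)) := by
  have m := modeMeas h hθ k
  have mB := BMeas h hθ k
  have mc : AEStronglyMeasurable (fun t => (starRingEnd ℂ) (u t k)) (volume.restrict (Ioc 0 T)) :=
    Complex.continuous_conj.comp_aestronglyMeasurable m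
  have := (mc.mul (((aestronglyMeasurable_const (b := f k)).sub
    (m.const_mul ((ν * lam k : ℝ) : ℂ))).sub mB))
  exact (Complex.continuous_re.comp_aestronglyMeasurable this).const_mul 2

lemma sqDeriv (h : IsNSSol ν f T θ u) (k : Freq) {t : ℝ} (ht : t ∈ Ioc 0 T) :
    HasDerivAt (fun s => ‖u s k‖ ^ 2) (gg ν f (u t) k) t := by
  have := (h.deriv k t ht).norm_sq
  rw [Complex.inner] at this
  unfold gg
  rw [mul_comm ((starRingEnd ℂ) _)]
  exact this

lemma EL (hν : 0 < ν) (b : ℕ) (h : IsNSSol ν f T θ u) (hf : Fin' b f)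
    (hθ : Fin' (b + 1) θ)
    (hfin : ∀ᵐ τ ∂(volume.restrict (Ioc 0 T)), Fin' (b + 1) (u τ))
    {Q : ℝ → ℝ} (hQ : IntegrableOn Q (Ioc 0 T)) (hQ0 : ∀ τ, 0 ≤ Q τ)
    (hle : ∀ᵐ τ ∂(volume.restrict (Ioc 0 T)), Kb ν b * S 1 (u τ) * S (b + 1) (u τ) ≤ Q τ)
    (F : Finset Freq) {t : ℝ} (ht : t ∈ Icc 0 T) :
    ∑ k ∈ F, rr k ^ (2 * (b + 1)) * ‖u t k‖ ^ 2 +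
      ν * ∑ k ∈ F, ∫ τ in Ioc 0 t, rr k ^ (2 * (b + 2)) * ‖u τ k‖ ^ 2 ≤
    S (b + 1) θ + T * (2 / ν * S b f) + ∫ τ in Ioc 0 T, Q τ := by
  have hθ1 : Fin' 1 θ := Fin_mono (by omega) hθ
  have hf0 : Fin' 0 f := Fin_mono (by omega) hf
  obtain ⟨M, hM0, hM⟩ := sup1 h hθ1
  set N : ℝ := ∑ k ∈ F, rr k with hNd
  have hN : 0 ≤ N := Finset.sum_nonneg fun k _ => (rr_pos k).le
  have hFN : ∀ k ∈ F, rr k ≤ N := fun k hk =>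
    Finset.single_le_sum (f := rr) (fun j _ => (rr_pos j).le) hk
  have m0 : ∀ k, 0 ≤ min (rr k) N := fun k => le_min (rr_pos k).le hN
  have mN : ∀ k, (min (rr k) N ^ b) ^ 2 ≤ (N ^ b) ^ 2 := fun k =>
    pow_le_pow_left₀ (pow_nonneg (m0 k) _) (pow_le_pow_left₀ (m0 k) (min_le_right _ _) _) 2
  have mr : ∀ k, (min (rr k) N ^ b) ^ 2 ≤ (rr k ^ b) ^ 2 := fun k =>
    pow_le_pow_left₀ (pow_nonneg (m0 k) _) (pow_le_pow_left₀ (m0 k) (min_le_left _ _) _) 2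
  have hsub : Ioc 0 t ⊆ Ioc 0 T := Ioc_subset_Ioc_right ht.2
  have hmono : volume.restrict (Ioc 0 t) ≤ volume.restrict (Ioc 0 T) :=
    Measure.restrict_mono hsub le_rfl
  set w : Freq → ℝ := fun k => rr k ^ 2 * (min (rr k) N ^ b) ^ 2 with hw
  have hw0 : ∀ k, 0 ≤ w k := fun k => by positivity
  have hwN : ∀ k, w k ≤ (N ^ b) ^ 2 * rr k ^ 2 := fun k => by
    rw [mul_comm]; exact mul_le_mul_of_nonneg_left (mN k) (sq_nonneg _)
  -- exchange
  obtain ⟨g1, g2, g3⟩ := H1 (μ := volume.restrict (Ioc 0 t))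
    (F := fun k τ => w k * gg ν f (u τ) k)
    (G := fun τ => (N ^ b) ^ 2 * (S 0 f + (1 + 2 * ν) * S 2 (u τ) + 100 * (1 + M) * S 2 (u τ)))
    (fun k => ((ggMeas h hθ1 k).mono_measure hmono).const_mul _)
    (by
      filter_upwards [ae_restrict_mem measurableSet_Ioc] with τ hτ
      have hτ' := hsub hτ
      obtain ⟨a1, a2⟩ := gg_abs hν hf0 (fin2 h hτ')
      have hpt : ∀ k, |w k * gg ν f (u τ) k| ≤ (N ^ b) ^ 2 * (rr k ^ 2 * |gg ν f (u τ) k|) := by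
        intro k
        rw [abs_mul, abs_of_nonneg (hw0 k), ← mul_assoc]
        exact mul_le_mul_of_nonneg_right (hwN k) (abs_nonneg _)
      have hS := Summable.of_nonneg_of_le (fun k => abs_nonneg _) hpt (a1.mul_left _)
      refine ⟨hS, (hS.tsum_le_tsum hpt (a1.mul_left _)).trans ?_⟩
      rw [tsum_mul_left]
      refine mul_le_mul_of_nonneg_left (a2.trans ?_) (sq_nonneg _)
      have := hM τ (Ioc_subset_Icc_self hτ')
      have s2 := S_nonneg 2 (u τ)
      gcongr)
    (by
      have i2 : IntegrableOn (fun τ => S 2 (u τ)) (Ioc 0 t) := (int2 h).mono_set hsub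
      exact (((integrable_const _).add (i2.const_mul _)).add (i2.const_mul _)).const_mul _)
  have ftc : ∀ k, ∫ τ in Ioc 0 t, w k * gg ν f (u τ) k = w k * ‖u t k‖ ^ 2 - w k * ‖θ k‖ ^ 2 := by
    intro k
    rw [← intervalIntegral.integral_of_le ht.1, ← h.init]
    refine intervalIntegral.integral_eq_sub_of_hasDerivAt_of_le
      (f := fun s => w k * ‖u s k‖ ^ 2) ht.1 ?_ ?_ ?_
    · exact continuousOn_const.mul
        ((((modeCont h hθ1 k).mono (Icc_subset_Icc_right ht.2)).norm).pow 2)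
    · intro s hs
      exact (sqDeriv h k (hsub (Ioo_subset_Ioc_self hs))).const_mul _
    · rw [intervalIntegrable_iff_integrableOn_Ioc_of_le ht.1]; exact g1 k
  have hwS : ∀ c : Coef, Fin' 1 c → Summable fun k => w k * ‖c k‖ ^ 2 := by
    intro c hc
    refine Summable.of_nonneg_of_le (fun k => mul_nonneg (hw0 k) (sq_nonneg _)) (fun k => ?_)
      (hc.mul_left ((N ^ b) ^ 2))
    rw [← mul_assoc, mul_one]
    exact mul_le_mul_of_nonneg_right (hwN k) (sq_nonneg _)
  have st := hwS _ (fin1 h hθ1 ht)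
  have s0 := hwS _ hθ1
  have hsum : ∑' k, w k * ‖u t k‖ ^ 2 - ∑' k, w k * ‖θ k‖ ^ 2 =
      ∫ τ in Ioc 0 t, ∑' k, w k * gg ν f (u τ) k := by
    rw [← g3.tsum_eq, ← st.tsum_sub s0]
    exact tsum_congr fun k => (ftc k).symm
  have iF : ∀ k, IntegrableOn (fun τ => rr k ^ (2 * (b + 2)) * ‖u τ k‖ ^ 2) (Ioc 0 t) := by
    intro k
    have : ContinuousOn (fun τ => rr k ^ (2 * (b + 2)) * ‖u τ k‖ ^ 2) (Icc 0 t) :=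
      continuousOn_const.mul ((((modeCont h hθ1 k).mono (Icc_subset_Icc_right ht.2)).norm).pow 2)
    exact (this.integrableOn_Icc).mono_set Ioc_subset_Icc_self
  have iQ : IntegrableOn Q (Ioc 0 t) := hQ.mono_set hsub
  have iFs : IntegrableOn (fun τ => ∑ k ∈ F, rr k ^ (2 * (b + 2)) * ‖u τ k‖ ^ 2) (Ioc 0 t) :=
    integrable_finsetSum _ (fun k _ => iF k)
  have iA : IntegrableOn (fun τ => -ν * ∑ k ∈ F, rr k ^ (2 * (b + 2)) * ‖u τ k‖ ^ 2 +
      2 / ν * S b f) (Ioc 0 t) := (iFs.const_mul _).add (integrable_const _)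
  have hintq : ∫ τ in Ioc 0 t, ∑' k, w k * gg ν f (u τ) k ≤
      ∫ τ in Ioc 0 t, (-ν * ∑ k ∈ F, rr k ^ (2 * (b + 2)) * ‖u τ k‖ ^ 2 + 2 / ν * S b f + Q τ) := by
    refine integral_mono_ae g2 (iA.add iQ) ?_
    filter_upwards [ae_restrict_mem measurableSet_Ioc, ae_mono hmono hfin, ae_mono hmono hle]
      with τ h1 h2 h3
    have := Pt hν b hf (fin2 h (hsub h1)) h2 (h.real τ (Ioc_subset_Icc_self (hsub h1))) hN F hFN
    simp only [hw]
    linarith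
  have hval : ∫ τ in Ioc 0 t, (-ν * ∑ k ∈ F, rr k ^ (2 * (b + 2)) * ‖u τ k‖ ^ 2 +
      2 / ν * S b f + Q τ) = -ν * ∑ k ∈ F, (∫ τ in Ioc 0 t, rr k ^ (2 * (b + 2)) * ‖u τ k‖ ^ 2) +
      t * (2 / ν * S b f) + ∫ τ in Ioc 0 t, Q τ := by
    rw [integral_add iA iQ, integral_add (iFs.const_mul _) (integrable_const _),
      integral_const_mul, integral_finsetSum _ (fun k _ => iF k), setIntegral_const]
    simp [ht.1]
  have hQm : ∫ τ in Ioc 0 t, Q τ ≤ ∫ τ in Ioc 0 T, Q τ :=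
    setIntegral_mono_set hQ (Filter.Eventually.of_forall hQ0) hsub.eventuallyLE
  have hEt : ∑ k ∈ F, rr k ^ (2 * (b + 1)) * ‖u t k‖ ^ 2 ≤ ∑' k, w k * ‖u t k‖ ^ 2 := by
    refine le_trans (le_of_eq ?_) (st.sum_le_tsum F
      (fun k _ => mul_nonneg (hw0 k) (sq_nonneg _)))
    refine Finset.sum_congr rfl fun k hk => ?_
    simp only [hw]
    rw [min_eq_left (hFN k hk)]; ring
  have hE0 : ∑' k, w k * ‖θ k‖ ^ 2 ≤ S (b + 1) θ := by
    refine s0.tsum_le_tsum (fun k => ?_) hθ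
    have := mr k
    calc w k * ‖θ k‖ ^ 2 ≤ rr k ^ 2 * (rr k ^ b) ^ 2 * ‖θ k‖ ^ 2 := by simp only [hw]; gcongr
      _ = _ := by ring
  have hfS : t * (2 / ν * S b f) ≤ T * (2 / ν * S b f) :=
    mul_le_mul_of_nonneg_right ht.2 (mul_nonneg (by positivity) (S_nonneg b f))
  linarith

end sol

end NS2D

namespace NS2D

section sol
variable {T ν : ℝ} {f θ : Coef} {u : ℝ → Coef}

lemma EL2 (hν : 0 < ν) (hT : 0 < T) (b : ℕ) (h : IsNSSol ν f T θ u) (hf : Fin' b f)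
    (hθ : Fin' (b + 1) θ)
    (hfin : ∀ᵐ τ ∂(volume.restrict (Ioc 0 T)), Fin' (b + 1) (u τ))
    {Q : ℝ → ℝ} (hQ : IntegrableOn Q (Ioc 0 T)) (hQ0 : ∀ τ, 0 ≤ Q τ)
    (hle : ∀ᵐ τ ∂(volume.restrict (Ioc 0 T)), Kb ν b * S 1 (u τ) * S (b + 1) (u τ) ≤ Q τ)
    {K : ℝ} (hK : S (b + 1) θ + T * (2 / ν * S b f) + ∫ τ in Ioc 0 T, Q τ ≤ K) :
    (∀ t ∈ Icc 0 T, Fin' (b + 1) (u t)) ∧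
    (∀ᵐ t ∂(volume.restrict (Ioc 0 T)), Fin' (b + 2) (u t)) ∧
    IntegrableOn (fun t => S (b + 2) (u t)) (Ioc 0 T) ∧
    (∀ t ∈ Icc 0 T, S (b + 1) (u t) ≤ K) ∧
    ∫ t in Ioc 0 T, S (b + 2) (u t) ≤ ν⁻¹ * K := by
  have hθ1 : Fin' 1 θ := Fin_mono (by omega) hθ
  have key := fun (F : Finset Freq) t (ht : t ∈ Icc 0 T) =>
    (EL hν b h hf hθ hfin hQ hQ0 hle F ht).trans hK
  have nn : ∀ (F : Finset Freq) t, 0 ≤ ∑ k ∈ F, ∫ τ in Ioc 0 t,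
      rr k ^ (2 * (b + 2)) * ‖u τ k‖ ^ 2 := fun F t => Finset.sum_nonneg fun k _ =>
    integral_nonneg fun τ => by have := rr_pos k; positivity
  have nn' : ∀ (k : Freq) t, 0 ≤ rr k ^ (2 * (b + 1)) * ‖u t k‖ ^ 2 := fun k t => by
    have := rr_pos k; positivity
  have k1 : ∀ t ∈ Icc 0 T, ∀ F : Finset Freq,
      ∑ k ∈ F, rr k ^ (2 * (b + 1)) * ‖u t k‖ ^ 2 ≤ K := by
    intro t ht F
    have := key F t ht
    have := mul_nonneg hν.le (nn F t)
    linarith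
  obtain ⟨q1, q2, q3⟩ := H2 (μ := volume.restrict (Ioc 0 T))
    (F := fun k τ => rr k ^ (2 * (b + 2)) * ‖u τ k‖ ^ 2) (K := ν⁻¹ * K)
    (fun k => by
      have : ContinuousOn (fun τ => rr k ^ (2 * (b + 2)) * ‖u τ k‖ ^ 2) (Icc 0 T) :=
        continuousOn_const.mul (((modeCont h hθ1 k).norm).pow 2)
      exact (this.integrableOn_Icc).mono_set Ioc_subset_Icc_self)
    (fun k t => by have := rr_pos k; positivity)
    (fun F => by
      have := key F T ⟨hT.le, le_rfl⟩
      have h0 : 0 ≤ ∑ k ∈ F, rr k ^ (2 * (b + 1)) * ‖u T k‖ ^ 2 :=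
        Finset.sum_nonneg fun k _ => nn' k T
      rw [inv_mul_eq_div, le_div_iff₀ hν]
      linarith)
  exact ⟨fun t ht => summable_of_sum_le (fun k => nn' k t) (k1 t ht), q1, q2,
    fun t ht => Real.tsum_le_of_sum_le (fun k => nn' k t) (k1 t ht), q3⟩

/-- the bound with a given constant -/
def Good (T ν : ℝ) (f : Coef) (b : ℕ) (C : ℝ) : Prop :=
  ∀ (θ : Coef) (u : ℝ → Coef), Fin' (b + 1) θ → IsNSSol ν f T θ u →
    (∀ t ∈ Icc 0 T, Fin' (b + 1) (u t)) ∧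
    (∀ᵐ t ∂(volume.restrict (Ioc 0 T)), Fin' (b + 2) (u t)) ∧
    IntegrableOn (fun t => S (b + 2) (u t)) (Ioc 0 T) ∧
    (∀ t ∈ Icc 0 T, S (b + 1) (u t) ≤ C * (1 + S (b + 1) θ ^ (b + 1))) ∧
    ∫ t in Ioc 0 T, S (b + 2) (u t) ≤ C * (1 + S (b + 1) θ ^ (b + 1))

lemma good_aux (hν : 0 < ν) {K C' X : ℝ} (hK : K ≤ C' * X) (hX : 0 ≤ X) (hC : 0 ≤ C') :
    K ≤ (1 + ν⁻¹) * C' * X ∧ ν⁻¹ * (C' * X) ≤ (1 + ν⁻¹) * C' * X := by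
  have : 0 ≤ ν⁻¹ := (inv_pos.mpr hν).le
  have h2 : 0 ≤ C' * X := mul_nonneg hC hX
  have h3 := mul_nonneg this h2
  constructor <;> linarith

lemma good0 (hν : 0 < ν) (hT : 0 < T) (hf : Fin' 0 f) : ∃ C, 0 ≤ C ∧ Good T ν f 0 C := by
  set C' : ℝ := 1 + T * (2 / ν * S 0 f) with hC'
  have sf := S_nonneg 0 f
  have hT0 : 0 ≤ T * (2 / ν * S 0 f) := by positivity
  have hC0 : 0 ≤ C' := by linarith
  refine ⟨(1 + ν⁻¹) * C', by positivity, fun θ u hθ h => ?_⟩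
  have sθ := S_nonneg 1 θ
  have hX : 0 ≤ 1 + S 1 θ ^ 1 := by positivity
  obtain ⟨a1, a2, a3, a4, a5⟩ := EL2 (Q := fun _ => 0) (K := C' * (1 + S 1 θ ^ 1)) hν hT 0 h hf hθ
    (by
      filter_upwards [ae_restrict_mem measurableSet_Ioc] with τ hτ
      exact fin1 h hθ (Ioc_subset_Icc_self hτ))
    integrableOn_zero (fun _ => le_rfl)
    (Filter.Eventually.of_forall fun τ => by simp [Kb])
    (by
      simp only [integral_zero, zero_add, pow_one]
      rw [hC']
      nlinarith [mul_nonneg hT0 sθ])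
  have g := good_aux hν (le_refl (C' * (1 + S 1 θ ^ 1))) hX hC0
  exact ⟨a1, a2, a3, fun t ht => (a4 t ht).trans g.1, a5.trans g.2⟩

lemma poly1 {X : ℝ} (hX : 0 ≤ X) (n : ℕ) : (1 + X) * (1 + X ^ n) ≤ 4 * (1 + X ^ (n + 1)) := by
  rcases le_total X 1 with h | h
  · have h1 : X ^ n ≤ 1 := pow_le_one₀ hX h
    have h2 : 0 ≤ X ^ (n + 1) := by positivity
    have h3 : 0 ≤ X ^ n := by positivity
    nlinarith
  · have h1 : 1 ≤ X ^ n := one_le_pow₀ h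
    rw [pow_succ]
    nlinarith

lemma poly2 {X : ℝ} (hX : 0 ≤ X) (n : ℕ) : X ≤ 1 + X ^ (n + 1) := by
  rcases le_total X 1 with h | h
  · have h2 : 0 ≤ X ^ (n + 1) := by positivity
    linarith
  · have h1 : 1 ≤ X ^ n := one_le_pow₀ h
    rw [pow_succ]
    nlinarith

lemma good_step (hν : 0 < ν) (hT : 0 < T) (b : ℕ) (hf : Fin' (b + 1) f) {C₀ C₁ : ℝ}
    (h0 : 0 ≤ C₀) (h1 : 0 ≤ C₁) (g0 : Good T ν f 0 C₀) (g1 : Good T ν f b C₁) :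
    ∃ C, 0 ≤ C ∧ Good T ν f (b + 1) C := by
  set C' : ℝ := 1 + T * (2 / ν * S (b + 1) f) + Kb ν (b + 1) * C₀ * C₁ * 4 with hC'
  have sf := S_nonneg (b + 1) f
  have hT0 : 0 ≤ T * (2 / ν * S (b + 1) f) := by positivity
  have kb := Kb_nonneg hν (b + 1)
  have hkk : 0 ≤ Kb ν (b + 1) * C₀ * C₁ := by positivity
  have hC0 : 0 ≤ C' := by linarith
  refine ⟨(1 + ν⁻¹) * C', by positivity, fun θ u hθ h => ?_⟩
  obtain ⟨a1, a2, a3, a4, a5⟩ := g0 θ u (Fin_mono (by omega) hθ) h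
  have hθb : Fin' (b + 1) θ := Fin_mono (by omega) hθ
  obtain ⟨b1, b2, b3, b4, b5⟩ := g1 θ u hθb h
  have s1 : S 1 θ ≤ S (b + 2) θ := S_mono (by omega) hθ
  have s2 : S (b + 1) θ ≤ S (b + 2) θ := S_mono (by omega) hθ
  have p1 := S_nonneg 1 θ
  have p2 := S_nonneg (b + 1) θ
  have p3 := S_nonneg (b + 2) θ
  set X := S (b + 2) θ with hXd
  have hX : 0 ≤ 1 + X ^ (b + 2) := by positivity
  have a4' : ∀ t ∈ Icc 0 T, S 1 (u t) ≤ C₀ * (1 + X) := by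
    intro t ht
    refine (a4 t ht).trans ?_
    simp only [zero_add, pow_one]
    gcongr
  have b5' : ∫ t in Ioc 0 T, S (b + 2) (u t) ≤ C₁ * (1 + X ^ (b + 1)) := by
    refine b5.trans ?_
    gcongr
  obtain ⟨c1, c2, c3, c4, c5⟩ := EL2
    (Q := fun τ => Kb ν (b + 1) * (C₀ * (1 + X)) * S (b + 2) (u τ))
    (K := C' * (1 + X ^ (b + 2))) hν hT (b + 1) h hf hθ b2
    (b3.const_mul _) (fun τ => by have := S_nonneg (b + 2) (u τ); positivity)
    (by
      filter_upwards [ae_restrict_mem measurableSet_Ioc] with τ hτ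
      have := a4' τ (Ioc_subset_Icc_self hτ)
      have q := S_nonneg (b + 2) (u τ)
      change Kb ν (b + 1) * S 1 (u τ) * S (b + 2) (u τ) ≤ _
      gcongr)
    (by
      rw [integral_const_mul]
      change X + T * (2 / ν * S (b + 1) f) + _ ≤ _
      have e1 : Kb ν (b + 1) * (C₀ * (1 + X)) * ∫ t in Ioc 0 T, S (b + 2) (u t) ≤
          Kb ν (b + 1) * (C₀ * (1 + X)) * (C₁ * (1 + X ^ (b + 1))) := by gcongr
      have e2 : Kb ν (b + 1) * (C₀ * (1 + X)) * (C₁ * (1 + X ^ (b + 1))) ≤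
          Kb ν (b + 1) * C₀ * C₁ * 4 * (1 + X ^ (b + 2)) := by
        have := mul_le_mul_of_nonneg_left (poly1 p3 (b + 1)) hkk
        linarith
      have e3 := poly2 p3 (b + 1)
      have e4 : 0 ≤ X ^ (b + 2) := by positivity
      have e5 := mul_nonneg hT0 e4
      change X ≤ 1 + X ^ (b + 2) at e3
      rw [hC']
      linarith)
  have g := good_aux hν (le_refl (C' * (1 + X ^ (b + 2)))) hX hC0
  exact ⟨c1, c2, c3, fun t ht => (c4 t ht).trans g.1, c5.trans g.2⟩

lemma good_all (hν : 0 < ν) (hT : 0 < T) (b : ℕ) (hf : Fin' b f) :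
    ∃ C, 0 ≤ C ∧ Good T ν f b C := by
  induction b with
  | zero => exact good0 hν hT hf
  | succ b ih =>
    obtain ⟨C₀, h0, g0⟩ := good0 hν hT (Fin_mono (Nat.zero_le _) hf)
    obtain ⟨C₁, h1, g1⟩ := ih (Fin_mono (Nat.le_succ _) hf)
    exact good_step hν hT b hf h0 h1 g0 g1

end sol

end NS2D

namespace NS2D

section sol
variable {T ν : ℝ} {f θ : Coef} {u : ℝ → Coef}

/-- stationary Stokes part -/
def gst (ν : ℝ) (f : Coef) : Coef := fun k => f k / ((ν * lam k : ℝ) : ℂ)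

lemma gst_norm (hν : 0 < ν) (f : Coef) (k : Freq) (n : ℕ) :
    rr k ^ (2 * (n + 2)) * ‖gst ν f k‖ ^ 2 = (ν ^ 2)⁻¹ * (rr k ^ (2 * n) * ‖f k‖ ^ 2) := by
  have r := rr_pos k
  have p : 0 < ν * lam k := by rw [lam_eq]; positivity
  rw [gst, norm_div, Complex.norm_real, Real.norm_eq_abs, abs_of_pos p, lam_eq]
  have : rr k ^ (2 * (n + 2)) = rr k ^ (2 * n) * rr k ^ 4 := by rw [← pow_add]; ring_nf
  rw [this]
  field_simp

lemma gst_fin (hν : 0 < ν) {f : Coef} {n : ℕ} (hf : Fin' n f) : Fin' (n + 2) (gst ν f) := by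
  have := hf.mul_left (ν ^ 2)⁻¹
  refine this.congr fun k => (gst_norm hν f k n).symm

lemma modeIneq (hν : 0 < ν) (h : IsNSSol ν f T θ u) (hθ : Fin' 1 θ) (k : Freq)
    (hB : IntegrableOn (fun τ => ‖Bc (u τ) (u τ) k‖ ^ 2) (Ioc 0 T)) {s t : ℝ} (hs : 0 ≤ s)
    (hst : s ≤ t) (ht : t ≤ T) :
    ‖u t k - gst ν f k‖ ^ 2 ≤ ‖u s k - gst ν f k‖ ^ 2 +
      (2 * ν * rr k ^ 2)⁻¹ * ∫ τ in Ioc 0 T, ‖Bc (u τ) (u τ) k‖ ^ 2 := by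
  have r := rr_pos k
  have p : 0 < ν * lam k := by rw [lam_eq]; positivity
  have hsub : Ioc s t ⊆ Ioc 0 T := Ioc_subset_Ioc hs ht
  have hd : ∀ x ∈ Ioo s t, HasDerivAt (fun τ => ‖u τ k - gst ν f k‖ ^ 2)
      (2 * ((f k - ((ν * lam k : ℝ) : ℂ) * u x k - Bc (u x) (u x) k) *
        (starRingEnd ℂ) (u x k - gst ν f k)).re) x := by
    intro x hx
    have := ((h.deriv k x (hsub (Ioo_subset_Ioc_self hx))).sub_const (gst ν f k)).norm_sq
    rw [Complex.inner] at this
    exact this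
  have hB2 := (hB.mono_set hsub).const_mul (2 * ν * rr k ^ 2)⁻¹
  have main := intervalIntegral.sub_le_integral_of_hasDeriv_right_of_le
    (g := fun τ => ‖u τ k - gst ν f k‖ ^ 2)
    (φ := fun τ => (2 * ν * rr k ^ 2)⁻¹ * ‖Bc (u τ) (u τ) k‖ ^ 2) hst
    ((((modeCont h hθ k).mono (Icc_subset_Icc hs ht)).sub continuousOn_const).norm.pow 2)
    (fun x hx => (hd x hx).hasDerivWithinAt)
    (by rw [integrableOn_Icc_iff_integrableOn_Ioc]; exact hB2)
    (by
      intro x hx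
      have e : f k = ((ν * lam k : ℝ) : ℂ) * gst ν f k := by
        have : ((ν * lam k : ℝ) : ℂ) ≠ 0 := by exact_mod_cast p.ne'
        rw [gst]; field_simp
      have e2 : f k - ((ν * lam k : ℝ) : ℂ) * u x k - Bc (u x) (u x) k =
        -(((ν * lam k : ℝ) : ℂ) * (u x k - gst ν f k)) - Bc (u x) (u x) k := by
        linear_combination e
      rw [e2]
      generalize u x k - gst ν f k = w
      generalize Bc (u x) (u x) k = B
      have i1 := (abs_le.mp (re_le B w)).1
      have e3 : ((-(((ν * lam k : ℝ) : ℂ) * w) - B) * (starRingEnd ℂ) w).re =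
          -(ν * lam k) * ‖w‖ ^ 2 - (B * (starRingEnd ℂ) w).re := by
        rw [← Complex.normSq_eq_norm_sq, Complex.normSq_apply]
        simp
        ring
      rw [e3, ← lam_eq]
      have e4 : (2 * ν * lam k)⁻¹ * ‖B‖ ^ 2 - (2 * (‖B‖ * ‖w‖) - 2 * (ν * lam k) * ‖w‖ ^ 2) =
          (2 * ν * lam k)⁻¹ * (‖B‖ - 2 * ν * lam k * ‖w‖) ^ 2 := by
        have : lam k ≠ 0 := by rw [lam_eq]; positivity
        field_simp
        ring
      have e5 : 0 ≤ (2 * ν * lam k)⁻¹ * (‖B‖ - 2 * ν * lam k * ‖w‖) ^ 2 := by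
        have : 0 < 2 * ν * lam k := by linarith
        positivity
      linarith)
  rw [intervalIntegral.integral_of_le hst, integral_const_mul] at main
  have hm : ∫ τ in Ioc s t, ‖Bc (u τ) (u τ) k‖ ^ 2 ≤ ∫ τ in Ioc 0 T, ‖Bc (u τ) (u τ) k‖ ^ 2 :=
    setIntegral_mono_set hB (Filter.Eventually.of_forall fun τ => sq_nonneg _) hsub.eventuallyLE
  have := mul_le_mul_of_nonneg_left hm (by positivity : 0 ≤ (2 * ν * rr k ^ 2)⁻¹)
  linarith

lemma BI (n : ℕ) (h : IsNSSol ν f T θ u) (hθ : Fin' (n + 2) θ) {M : ℝ}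
    (h1 : ∀ t ∈ Icc 0 T, Fin' (n + 2) (u t))
    (h2 : ∀ᵐ t ∂(volume.restrict (Ioc 0 T)), Fin' (n + 3) (u t))
    (h3 : IntegrableOn (fun t => S (n + 3) (u t)) (Ioc 0 T))
    (h4 : ∀ t ∈ Icc 0 T, S (n + 2) (u t) ≤ M) :
    (∀ k, IntegrableOn (fun τ => ‖Bc (u τ) (u τ) k‖ ^ 2) (Ioc 0 T)) ∧
    Summable fun k => rr k ^ (2 * (n + 2)) * ∫ τ in Ioc 0 T, ‖Bc (u τ) (u τ) k‖ ^ 2 := by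
  have hθ1 : Fin' 1 θ := Fin_mono (by omega) hθ
  obtain ⟨C, hC, hF⟩ := F3 (n + 2)
  obtain ⟨g1, g2, g3⟩ := H1 (μ := volume.restrict (Ioc 0 T))
    (F := fun k τ => rr k ^ (2 * (n + 2)) * ‖Bc (u τ) (u τ) k‖ ^ 2)
    (G := fun τ => C * M * S (n + 3) (u τ))
    (fun k => (((BMeas h hθ1 k).norm).pow 2).const_mul _)
    (by
      filter_upwards [h2, ae_restrict_mem measurableSet_Ioc] with τ q hτ
      obtain ⟨a1, a2⟩ := hF (u τ) (fin2 h hτ) q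
      have hτ' := Ioc_subset_Icc_self hτ
      have nn : ∀ k, |rr k ^ (2 * (n + 2)) * ‖Bc (u τ) (u τ) k‖ ^ 2| =
          rr k ^ (2 * (n + 2)) * ‖Bc (u τ) (u τ) k‖ ^ 2 := fun k =>
        abs_of_nonneg (by have := rr_pos k; positivity)
      simp only [nn]
      refine ⟨a1, a2.trans ?_⟩
      have m : S 2 (u τ) ≤ M := (S_mono (by omega) (h1 τ hτ')).trans (h4 τ hτ')
      have := S_nonneg (n + 3) (u τ)
      change C * S 2 (u τ) * S (n + 3) (u τ) ≤ _
      gcongr)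
    (h3.const_mul _)
  constructor
  · intro k
    have r : rr k ^ (2 * (n + 2)) ≠ 0 := pow_ne_zero _ (rr_pos k).ne'
    have := (g1 k).const_mul (rr k ^ (2 * (n + 2)))⁻¹
    refine this.congr (Filter.Eventually.of_forall fun τ => ?_)
    simp only
    rw [← mul_assoc, inv_mul_cancel₀ r, one_mul]
  · refine g3.summable.congr fun k => ?_
    rw [integral_const_mul]

lemma reg (hν : 0 < ν) (n : ℕ) (h : IsNSSol ν f T θ u) (hf : Fin' (n + 1) f)
    (hθ : Fin' (n + 2) θ) {M : ℝ}
    (h1 : ∀ t ∈ Icc 0 T, Fin' (n + 2) (u t))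
    (h2 : ∀ᵐ t ∂(volume.restrict (Ioc 0 T)), Fin' (n + 3) (u t))
    (h3 : IntegrableOn (fun t => S (n + 3) (u t)) (Ioc 0 T))
    (h4 : ∀ t ∈ Icc 0 T, S (n + 2) (u t) ≤ M) :
    (∀ t ∈ Ioc 0 T, Fin' (n + 3) (u t)) ∧
    (∀ t ∈ Icc 0 T, Filter.Tendsto (fun s => S (n + 2) (u s - u t))
      (nhdsWithin t (Icc 0 T)) (nhds 0)) := by
  have hθ1 : Fin' 1 θ := Fin_mono (by omega) hθ
  obtain ⟨b1, b2⟩ := BI n h hθ h1 h2 h3 h4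
  have hg := gst_fin hν hf
  set I : Freq → ℝ := fun k => ∫ τ in Ioc 0 T, ‖Bc (u τ) (u τ) k‖ ^ 2 with hI
  have I0 : ∀ k, 0 ≤ I k := fun k => integral_nonneg fun τ => sq_nonneg _
  have hrec : ∀ (k : Freq) (x : ℂ), ‖x‖ ^ 2 ≤ 2 * (‖x - gst ν f k‖ ^ 2 + ‖gst ν f k‖ ^ 2) := by
    intro k x
    have := sq_sub_le (x - gst ν f k) (-gst ν f k)
    simpa using this
  have hI3 : Summable fun k => rr k ^ (2 * (n + 3)) * ((2 * ν * rr k ^ 2)⁻¹ * I k) := by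
    refine (b2.mul_left (2 * ν)⁻¹).congr fun k => ?_
    have := rr_pos k
    have e : rr k ^ (2 * (n + 3)) = rr k ^ (2 * (n + 2)) * rr k ^ 2 := by rw [← pow_add]; ring_nf
    rw [e]
    field_simp
    try rfl
  constructor
  · intro t ht
    obtain ⟨s, hs, hsF⟩ : ∃ s ∈ Ioo 0 t, Fin' (n + 3) (u s) := by
      have hae : ∀ᵐ s ∂(volume.restrict (Ioo 0 t)), Fin' (n + 3) (u s) :=
        ae_mono (Measure.restrict_mono
          (Ioo_subset_Ioc_self.trans (Ioc_subset_Ioc_right ht.2)) le_rfl) h2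
      have hne : Filter.NeBot (ae (volume.restrict (Ioo 0 t))) := by
        rw [ae_neBot]
        intro h0
        rw [Measure.restrict_eq_zero, Real.volume_Ioo] at h0
        simp at h0
        linarith [ht.1]
      obtain ⟨s, a, b⟩ := (hae.and (ae_restrict_mem measurableSet_Ioo)).exists
      exact ⟨s, b, a⟩
    have hsg : Fin' (n + 3) (u s - gst ν f) := Fin_sub hsF hg
    refine Summable.of_nonneg_of_le (fun k => by have := rr_pos k; positivity) (fun k => ?_)
      (((hsg.add hI3).add hg).mul_left 2)
    have r := rr_pos k
    have m := modeIneq hν h hθ1 k (b1 k) hs.1.le hs.2.le ht.2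
    have q := hrec k (u t k)
    have : ‖u t k‖ ^ 2 ≤ 2 * ((‖u s k - gst ν f k‖ ^ 2 + (2 * ν * rr k ^ 2)⁻¹ * I k) +
      ‖gst ν f k‖ ^ 2) := by linarith
    refine (mul_le_mul_of_nonneg_left this (pow_nonneg r.le (2 * (n + 3)))).trans (le_of_eq ?_)
    simp only [Pi.sub_apply]
    ring
  · intro t ht
    have hg2 : Fin' (n + 2) (gst ν f) := Fin_mono (by omega) hg
    have hsg : Fin' (n + 2) (u 0 - gst ν f) := Fin_sub (by rw [h.init]; exact hθ) hg2
    have hI2 : Summable fun k => rr k ^ (2 * (n + 2)) * ((2 * ν * rr k ^ 2)⁻¹ * I k) := by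
      refine Summable.of_nonneg_of_le (fun k => ?_) (fun k => ?_) hI3
      · have := rr_pos k; have := I0 k; positivity
      · have := rr_pos k
        have := I0 k
        exact mul_le_mul_of_nonneg_right (pow_le_pow_right₀ (one_le_rr k) (by omega))
          (by positivity)
    have hM : ∀ s ∈ Icc 0 T, ∀ k, rr k ^ (2 * (n + 2)) * ‖u s k‖ ^ 2 ≤
        2 * (rr k ^ (2 * (n + 2)) * ‖(u 0 - gst ν f) k‖ ^ 2 +
          rr k ^ (2 * (n + 2)) * ((2 * ν * rr k ^ 2)⁻¹ * I k) +
          rr k ^ (2 * (n + 2)) * ‖gst ν f k‖ ^ 2) := by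
      intro s hs k
      have r := rr_pos k
      have m := modeIneq hν h hθ1 k (b1 k) le_rfl hs.1 hs.2
      have q := hrec k (u s k)
      have : ‖u s k‖ ^ 2 ≤ 2 * ((‖u 0 k - gst ν f k‖ ^ 2 + (2 * ν * rr k ^ 2)⁻¹ * I k) +
        ‖gst ν f k‖ ^ 2) := by linarith
      refine (mul_le_mul_of_nonneg_left this (pow_nonneg r.le (2 * (n + 2)))).trans (le_of_eq ?_)
      simp only [Pi.sub_apply]
      ring
    have hbs := (((hsg.add hI2).add hg2).mul_left 2).mul_left 4
    have ev : ∀ᶠ s in nhdsWithin t (Icc 0 T), s ∈ Icc 0 T := self_mem_nhdsWithin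
    have := tendsto_tsum_of_dominated_convergence (𝓕 := nhdsWithin t (Icc 0 T))
      (f := fun s k => rr k ^ (2 * (n + 2)) * ‖(u s - u t) k‖ ^ 2) (g := fun _ => (0 : ℝ)) hbs
      (fun k => by
        have c : ContinuousWithinAt (fun s => rr k ^ (2 * (n + 2)) * ‖u s k - u t k‖ ^ 2)
          (Icc 0 T) t := continuousWithinAt_const.mul
            (((modeCont h hθ1 k t ht).sub continuousWithinAt_const).norm.pow 2)
        have := c.tendsto
        simpa using this)
      (by
        filter_upwards [ev] with s hs k
        have r := rr_pos k
        have r2 : 0 ≤ rr k ^ (2 * (n + 2)) := by positivity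
        rw [Real.norm_eq_abs, abs_of_nonneg (by positivity)]
        have x1 := hM s hs k
        have x2 := hM t ht k
        have x3 := mul_le_mul_of_nonneg_left (sq_sub_le (u s k) (u t k)) r2
        rw [Pi.sub_apply]
        linarith)
    rw [tsum_zero] at this
    exact this

end sol

lemma main_nat (T ν : ℝ) (hT : 0 < T) (hν : 0 < ν) (b : ℕ)
    (f : Coef) (hf : Fin' b f) :
    (∀ (θ : Coef) (u : ℝ → Coef), Fin' (b + 1) θ → IsNSSol ν f T θ u →
      ContH ((b + 1 : ℕ) : ℝ) T u ∧ MemL2H ((b + 2 : ℕ) : ℝ) T u) := by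
  intro θ u hθ h
  obtain ⟨C, hC, hG⟩ := good_all hν hT b hf
  obtain ⟨a1, a2, a3, a4, a5⟩ := hG θ u hθ h
  cases b with
  | zero => exact ⟨by simpa using h.contH1, by simpa using h.memL2H2⟩
  | succ n =>
    obtain ⟨r1, r2⟩ := reg hν n h hf hθ a1 a2 a3 a4
    refine ⟨?_, ?_, ?_⟩
    · intro t ht ε hε
      have h0 := (Metric.tendsto_nhdsWithin_nhds.mp (r2 t ht)) (ε ^ 2) (by positivity)
      obtain ⟨δ, hδ, H⟩ := h0
      refine ⟨δ, hδ, fun s hs hst => ?_⟩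
      have := H hs (by rwa [Real.dist_eq])
      rw [Real.dist_eq, sub_zero, abs_of_nonneg (S_nonneg _ _)] at this
      rw [hN_eq, Real.sqrt_lt' hε]
      exact this
    · intro t ht
      exact ⟨h.real t (Ioc_subset_Icc_self ht), (finH_iff _ _).mpr (r1 t ht)⟩
    · simp only [hSq_eq]
      exact a3

end NS2D

namespace NS2D

/-- Proposition `PropNSBound`. Higher-order Sobolev bounds:
for an integer `a ≥ 1` and `f ∈ Ḣ^{a−1}_⋄`, every solution with
`θ ∈ Ḣ^a_⋄` satisfies `u_θ ∈ C([0,T], Ḣ^a_⋄) ∩ L²([0,T], Ḣ^{a+1}_⋄)`, and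
there is `C = C(T,ν,a,‖f‖_{Ḣ^{a−1}}) > 0` with
`sup_{0≤t≤T} ‖u_θ(t)‖²_{Ḣ^a} + ∫₀ᵀ ‖u_θ(t)‖²_{Ḣ^{a+1}} dt ≤ C (1 + ‖θ‖^{2a}_{Ḣ^a})`. -/
theorem statement2 (T ν : ℝ) (hT : 0 < T) (hν : 0 < ν) (a : ℤ) (ha : 1 ≤ a)
    (f : Coef) (hf : MemH ((a : ℝ) - 1) f) :
    (∀ (θ : Coef) (u : ℝ → Coef), MemH (a : ℝ) θ → IsNSSol ν f T θ u →
      ContH (a : ℝ) T u ∧ MemL2H ((a : ℝ) + 1) T u) ∧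
    (∃ C : ℝ, 0 < C ∧
      ∀ (θ : Coef) (u : ℝ → Coef), MemH (a : ℝ) θ → IsNSSol ν f T θ u →
        IntervalIntegrable (fun t => hSq ((a : ℝ) + 1) (u t)) volume 0 T ∧
        ∀ t ∈ Icc (0:ℝ) T,
          hSq (a : ℝ) (u t) + (∫ s in (0:ℝ)..T, hSq ((a : ℝ) + 1) (u s)) ≤
            C * (1 + hN (a : ℝ) θ ^ (2 * a))) := by
  obtain ⟨b, hb⟩ := Int.eq_ofNat_of_zero_le (by omega : 0 ≤ a - 1)
  obtain rfl : a = ((b + 1 : ℕ) : ℤ) := by push_cast; omega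
  have e1 : (((b + 1 : ℕ) : ℤ) : ℝ) = ((b + 1 : ℕ) : ℝ) := by norm_cast
  have e2 : ((b + 1 : ℕ) : ℝ) - 1 = (b : ℝ) := by push_cast; ring
  have e3 : ((b + 1 : ℕ) : ℝ) + 1 = ((b + 2 : ℕ) : ℝ) := by push_cast; ring
  rw [e1, e2] at hf
  simp only [e1, e3]
  have hf' := (finH_iff _ _).mp hf.2
  refine ⟨fun θ u hθ h => main_nat T ν hT hν b f hf' θ u ((finH_iff _ _).mp hθ.2) h, ?_⟩
  obtain ⟨C, hC, hG⟩ := good_all hν hT b hf'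
  refine ⟨2 * C + 1, by positivity, fun θ u hθ h => ?_⟩
  obtain ⟨a1, a2, a3, a4, a5⟩ := hG θ u ((finH_iff _ _).mp hθ.2) h
  simp only [hSq_eq]
  refine ⟨(intervalIntegrable_iff_integrableOn_Ioc_of_le hT.le).mpr a3, fun t ht => ?_⟩
  have x := a4 t ht
  rw [intervalIntegral.integral_of_le hT.le, hN_eq]
  have e4 : Real.sqrt (S (b + 1) θ) ^ (2 * ((b + 1 : ℕ) : ℤ)) = S (b + 1) θ ^ (b + 1) := by
    rw [zpow_mul, zpow_natCast]
    congr 1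
    have := Real.sq_sqrt (S_nonneg (b + 1) θ)
    exact_mod_cast this
  rw [e4]
  have : 0 ≤ S (b + 1) θ ^ (b + 1) := pow_nonneg (S_nonneg _ _) _
  linarith

end NS2D
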